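/- arXiv:1907.01634 — 2 statements merged into one kernel-verified Lean document; each statement's English description precedes it below -/
import Mathlib

section
/- Let 0 < q < 1, let C_1 := q^{1/6} f(-q) f(-q^10)/(f(-q^2) f(-q^5)) and C_4 := q^{2/3} f(-q^4) f(-q^40)/(f(-q^8) f(-q^20)), and set P := C_1·C_4 and Q := C_1/C_4. Then (P^3 + 1/P^3)[19(Q + 1/Q) + 8(Q^3 + 1/Q^3) + (Q^5 + 1/Q^5)] + (Q^6 + 1/Q^6) + 13(Q^4 + 1/Q^4) + 52(Q^2 + 1/Q^2) + 82 = P^6 + 1/P^6. -/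
open Real

/-- Ramanujan's theta function `φ(q) = ∑_{n=-∞}^∞ q^(n^2)`. -/
noncomputable def phi (q : ℝ) : ℝ := ∑' n : ℤ, q ^ (n ^ 2)

/-- Ramanujan's theta function `ψ(q) = ∑_{n=0}^∞ q^(n(n+1)/2)`. -/
noncomputable def psi (q : ℝ) : ℝ := ∑' n : ℕ, q ^ (n * (n + 1) / 2)

/-- `fneg q` is Ramanujan's `f(-q) = ∑_{n=-∞}^∞ (-1)^n q^(n(3n-1)/2)`. -/
noncomputable def fneg (q : ℝ) : ℝ := ∑' n : ℤ, (-1 : ℝ) ^ n * q ^ (n * (3 * n - 1) / 2)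

open Filter Topology

/-- The `q`-Pochhammer symbol `(z; q)_∞`. -/
noncomputable def qPoch (z q : ℝ) : ℝ := ∏' n : ℕ, (1 - z * q ^ n)

theorem tendsto_qPoch (z : ℝ) {q : ℝ} (hq0 : 0 < q) (hq1 : q < 1) :
    Tendsto (fun N => ∏ n ∈ Finset.range N, (1 - z * q ^ n)) atTop (𝓝 (qPoch z q)) := by
  have hs : Summable fun n : ℕ => ‖-(z * q ^ n)‖ := by
    simp only [norm_neg, norm_mul, norm_pow]
    exact (summable_geometric_of_lt_one (norm_nonneg q)
      (by rwa [Real.norm_of_nonneg hq0.le])).mul_left _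
  have := (multipliable_one_add_of_summable hs).hasProd.tendsto_prod_nat
  simpa only [qPoch, sub_eq_add_neg] using this

theorem qPoch_dissect (z : ℝ) {q : ℝ} (hq0 : 0 < q) (hq1 : q < 1) {k : ℕ} (hk : 0 < k) :
    qPoch z q = ∏ r ∈ Finset.range k, qPoch (z * q ^ r) (q ^ k) := by
  have h1 : Tendsto (fun N => ∏ r ∈ Finset.range k, ∏ n ∈ Finset.range N,
      (1 - z * q ^ r * (q ^ k) ^ n)) atTop
      (𝓝 (∏ r ∈ Finset.range k, qPoch (z * q ^ r) (q ^ k))) :=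
    tendsto_finsetProd _ fun r _ =>
      tendsto_qPoch _ (pow_pos hq0 k) (pow_lt_one₀ hq0.le hq1 hk.ne')
  have h2 := (tendsto_qPoch z hq0 hq1).comp (tendsto_id.atTop_mul_const' hk)
  refine tendsto_nhds_unique h2 (h1.congr fun N => ?_)
  simp only [Function.comp, id]
  induction N with
  | zero => simp
  | succ N ih =>
    rw [Nat.succ_mul, Finset.prod_range_add, ← ih]
    simp only [Finset.prod_range_succ, Finset.prod_mul_distrib]
    congr 1
    refine Finset.prod_congr rfl fun r _ => ?_
    ring

theorem qPoch_mul_qPoch_neg (z : ℝ) {q : ℝ} (hq0 : 0 < q) (hq1 : q < 1) :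
    qPoch z q * qPoch (-z) q = qPoch (z ^ 2) (q ^ 2) := by
  refine tendsto_nhds_unique ((tendsto_qPoch z hq0 hq1).mul (tendsto_qPoch (-z) hq0 hq1))
    ((tendsto_qPoch (z ^ 2) (pow_pos hq0 2) (pow_lt_one₀ hq0.le hq1 two_ne_zero)).congr
      fun N => ?_)
  rw [← Finset.prod_mul_distrib]
  refine Finset.prod_congr rfl fun r _ => ?_
  ring

theorem qPoch_eq_mul (z : ℝ) {q : ℝ} (hq0 : 0 < q) (hq1 : q < 1) :
    qPoch z q = (1 - z) * qPoch (z * q) q := by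
  refine tendsto_nhds_unique ((tendsto_qPoch z hq0 hq1).comp (tendsto_add_atTop_nat 1))
    (((tendsto_qPoch (z * q) hq0 hq1).const_mul (1 - z)).congr fun N => ?_)
  simp only [Function.comp, Finset.prod_range_succ', pow_zero, mul_one]
  rw [mul_comm]
  congr 1
  refine Finset.prod_congr rfl fun r _ => ?_
  ring

theorem qPoch_self_pos {q : ℝ} (hq0 : 0 < q) (hq1 : q < 1) : 0 < qPoch q q := by
  have hf (n : ℕ) : 0 < 1 - q * q ^ n := by
    have := pow_lt_one₀ hq0.le hq1 n.succ_ne_zero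
    rw [pow_succ'] at this
    linarith
  have h0 : 0 ≤ qPoch q q := ge_of_tendsto' (tendsto_qPoch q hq0 hq1) fun N =>
    Finset.prod_nonneg fun n _ => (hf n).le
  refine h0.lt_of_ne' ?_
  have := tprod_one_add_ne_zero_of_summable (f := fun n : ℕ => -(q * q ^ n))
  simp only [← sub_eq_add_neg] at this
  refine this (fun n => (hf n).ne') ?_
  simp only [norm_neg, norm_mul, norm_pow]
  exact (summable_geometric_of_lt_one (norm_nonneg q)
      (by rwa [Real.norm_of_nonneg hq0.le])).mul_left _

/-- `1 / (x; x)_n` for `n ≥ 0`, extended by zero to negative `n`. -/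
noncomputable def invPoch (x : ℝ) (n : ℤ) : ℝ :=
  if 0 ≤ n then (∏ k ∈ Finset.range n.toNat, (1 - x * x ^ k))⁻¹ else 0

theorem invPoch_sub_one {x : ℝ} (hx0 : 0 < x) (hx1 : x < 1) (n : ℤ) :
    invPoch x (n - 1) = (1 - x ^ n) * invPoch x n := by
  rcases lt_trichotomy n 0 with h | rfl | h
  · rw [invPoch, invPoch, if_neg (by omega), if_neg (by omega), mul_zero]
  · simp [invPoch]
  · obtain ⟨m, rfl⟩ : ∃ m : ℕ, n = m + 1 := ⟨(n - 1).toNat, by omega⟩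
    have hne : 1 - x * x ^ m ≠ 0 := by
      have := pow_lt_one₀ hx0.le hx1 m.succ_ne_zero
      rw [pow_succ'] at this
      linarith
    rw [invPoch, invPoch, if_pos (by omega), if_pos (by omega)]
    have h1 : ((m : ℤ) + 1 - 1).toNat = m := by omega
    have h2 : ((m : ℤ) + 1).toNat = m + 1 := by omega
    have h3 : x ^ ((m : ℤ) + 1) = x * x ^ m := by
      rw [zpow_add_one₀ hx0.ne', zpow_natCast, mul_comm]
    rw [h1, h2, h3, Finset.prod_range_succ, mul_inv, mul_left_comm, mul_inv_cancel₀ hne, mul_one]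

theorem hasSum_finite_jacobi {p w : ℝ} (hp0 : 0 < p) (hp1 : p < 1) (hw : w ≠ 0) (N : ℕ) :
    HasSum (fun n : ℤ => (∏ k ∈ Finset.range (2 * N), (1 - p ^ 2 * (p ^ 2) ^ k)) *
        invPoch (p ^ 2) (N + n) * invPoch (p ^ 2) (N - n) * (w ^ n * p ^ (n ^ 2)))
      (∏ k ∈ Finset.range N, (1 + w * p ^ (2 * k + 1)) * (1 + w⁻¹ * p ^ (2 * k + 1))) := by
  have hP0 : 0 < p ^ 2 := pow_pos hp0 2
  have hP1 : p ^ 2 < 1 := pow_lt_one₀ hp0.le hp1 two_ne_zero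
  induction N with
  | zero =>
    convert hasSum_single (0 : ℤ) ?_ using 1
    · simp [invPoch]
    · intro n hn
      rcases lt_or_gt_of_ne hn with h | h
      · have : invPoch (p ^ 2) ((0 : ℕ) + n) = 0 := if_neg (by simpa using h)
        rw [this]; ring
      · have : invPoch (p ^ 2) ((0 : ℕ) - n) = 0 := if_neg (by simpa using h)
        rw [this]; ring
  | succ N ih =>
    have h1 := (Equiv.subRight (1 : ℤ)).hasSum_iff.mpr ih
    have h2 := (Equiv.addRight (1 : ℤ)).hasSum_iff.mpr ih
    have h3 := (ih.mul_left (1 + p ^ (4 * N + 2))).add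
      ((h1.mul_left (w * p ^ (2 * N + 1))).add (h2.mul_left (w⁻¹ * p ^ (2 * N + 1))))
    rw [Finset.prod_range_succ]
    convert h3 using 1
    · rfl
    · funext n
      simp only [Function.comp, Equiv.subRight_apply, Equiv.coe_addRight]
      have ea : invPoch (p ^ 2) (N + n) =
          (1 - (p ^ 2) ^ ((N : ℤ) + n) * p ^ 2) * invPoch (p ^ 2) (N + n + 1) := by
        have := invPoch_sub_one hP0 hP1 (N + n + 1)
        rwa [add_sub_cancel_right, zpow_add_one₀ hP0.ne'] at this
      have ea' : invPoch (p ^ 2) (N + (n - 1)) =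
          (1 - (p ^ 2) ^ ((N : ℤ) + n)) * invPoch (p ^ 2) (N + n) := by
        rw [← invPoch_sub_one hP0 hP1, add_sub_assoc]
      have eb : invPoch (p ^ 2) (N - n) =
          (1 - (p ^ 2) ^ ((N : ℤ) - n) * p ^ 2) * invPoch (p ^ 2) (N - n + 1) := by
        have := invPoch_sub_one hP0 hP1 (N - n + 1)
        rwa [add_sub_cancel_right, zpow_add_one₀ hP0.ne'] at this
      have eb' : invPoch (p ^ 2) (N - (n + 1)) =
          (1 - (p ^ 2) ^ ((N : ℤ) - n)) * invPoch (p ^ 2) (N - n) := by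
        rw [← invPoch_sub_one hP0 hP1]; congr 1; ring
      have ec : (N : ℤ) + (n + 1) = N + n + 1 := by ring
      have ec' : (N : ℤ) - (n - 1) = N - n + 1 := by ring
      have ed : ((N + 1 : ℕ) : ℤ) + n = N + n + 1 := by push_cast; ring
      have ed' : ((N + 1 : ℕ) : ℤ) - n = N - n + 1 := by push_cast; ring
      have hw1 : w ^ (n - 1) = w ^ n * w⁻¹ := zpow_sub_one₀ hw n
      have hw2 : w ^ (n + 1) = w ^ n * w := zpow_add_one₀ hw n
      have hpm : p ^ (2 * N + 1) * p ^ ((n - 1) ^ 2) =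
          p ^ (n ^ 2) * ((p ^ 2) ^ ((N : ℤ) - n) * p ^ 2) := by
        rw [← zpow_natCast p (2 * N + 1), ← zpow_natCast p 2, ← zpow_mul, ← zpow_add₀ hp0.ne',
          ← zpow_add₀ hp0.ne', ← zpow_add₀ hp0.ne']
        congr 1; push_cast; ring
      have hpp : p ^ (2 * N + 1) * p ^ ((n + 1) ^ 2) =
          p ^ (n ^ 2) * ((p ^ 2) ^ ((N : ℤ) + n) * p ^ 2) := by
        rw [← zpow_natCast p (2 * N + 1), ← zpow_natCast p 2, ← zpow_mul, ← zpow_add₀ hp0.ne',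
          ← zpow_add₀ hp0.ne', ← zpow_add₀ hp0.ne']
        congr 1; push_cast; ring
      have huv : (p ^ 2) ^ ((N : ℤ) + n) * (p ^ 2) ^ ((N : ℤ) - n) = p ^ (4 * N) := by
        rw [← zpow_add₀ hP0.ne', ← zpow_natCast p (4 * N), ← zpow_natCast p 2, ← zpow_mul]
        congr 1; push_cast; ring
      have hprod : ∏ k ∈ Finset.range (2 * (N + 1)), (1 - p ^ 2 * (p ^ 2) ^ k) =
          (∏ k ∈ Finset.range (2 * N), (1 - p ^ 2 * (p ^ 2) ^ k)) *
            (1 - p ^ (4 * N) * p ^ 2) * (1 - p ^ (4 * N) * p ^ 4) := by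
        rw [show 2 * (N + 1) = 2 * N + 1 + 1 by ring, Finset.prod_range_succ,
          Finset.prod_range_succ]
        ring
      rw [ed, ed', hprod, ec, ec', ea', eb', ea, eb, hw1, hw2, pow_add p (4 * N) 2, ← huv]
      have hww : w * w⁻¹ = 1 := mul_inv_cancel₀ hw
      generalize (p ^ 2) ^ ((N : ℤ) + n) = u at *
      generalize (p ^ 2) ^ ((N : ℤ) - n) = v at *
      generalize invPoch (p ^ 2) (N + n + 1) = a at *
      generalize invPoch (p ^ 2) (N - n + 1) = b at *
      generalize ∏ k ∈ Finset.range (2 * N), (1 - p ^ 2 * (p ^ 2) ^ k) = c at *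
      generalize p ^ (n ^ 2) = s at *
      generalize p ^ ((n - 1) ^ 2) = s1 at *
      generalize p ^ ((n + 1) ^ 2) = s2 at *
      generalize p ^ (2 * N + 1) = r at *
      generalize w⁻¹ = w' at *
      generalize w ^ n = W at *
      linear_combination
        (-(c * a * b * W * (1 - u) * (1 - u * p ^ 2) * w * w')) * hpm
        - (c * a * b * W * (1 - v) * (1 - v * p ^ 2) * w * w') * hpp
        - (c * a * b * W * s * p ^ 2 * ((1 - u) * (1 - u * p ^ 2) * v
            + (1 - v) * (1 - v * p ^ 2) * u)) * hww
    · have hww : w * w⁻¹ = 1 := mul_inv_cancel₀ hw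
      linear_combination (∏ k ∈ Finset.range N, (1 + w * p ^ (2 * k + 1)) *
        (1 + w⁻¹ * p ^ (2 * k + 1))) * p ^ (4 * N + 2) * hww

theorem summable_zpow_mul_zpow_sq {p w : ℝ} (hp0 : 0 < p) (hp1 : p < 1) (hw : 0 < w) :
    Summable fun n : ℤ => w ^ n * p ^ (n ^ 2) := by
  have hT : 0 < -Real.log p / π := div_pos (neg_pos.mpr (Real.log_neg hp0 hp1)) pi_pos
  refine Summable.of_nonneg_of_le (fun n => by positivity) (fun n => ?_)
    (summable_pow_mul_jacobiTheta₂_term_bound (|Real.log w| / (2 * π)) hT 0)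
  have h1 : w ^ n * p ^ (n ^ 2) = Real.exp (n * Real.log w + n ^ 2 * Real.log p) := by
    rw [Real.exp_add, ← Real.rpow_intCast w, ← Real.rpow_intCast p, Real.rpow_def_of_pos hw,
      Real.rpow_def_of_pos hp0]
    push_cast
    ring_nf
  rw [h1, pow_zero, one_mul, Real.exp_le_exp]
  have h2 : (n : ℝ) * Real.log w ≤ |(n : ℝ)| * |Real.log w| := by
    rw [← abs_mul]; exact le_abs_self _
  have hpi := pi_ne_zero
  have h3 : -π * (-Real.log p / π * n ^ 2 - 2 * (|Real.log w| / (2 * π)) * |n|) =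
      n ^ 2 * Real.log p + |(n : ℝ)| * |Real.log w| := by
    push_cast
    field_simp
    ring
  rw [h3]
  linarith

theorem prod_one_sub_pow_pos {x : ℝ} (hx0 : 0 < x) (hx1 : x < 1) (N : ℕ) :
    0 < ∏ k ∈ Finset.range N, (1 - x * x ^ k) :=
  Finset.prod_pos fun k _ => by
    have := pow_lt_one₀ hx0.le hx1 k.succ_ne_zero
    rw [pow_succ'] at this
    linarith

theorem prod_one_sub_pow_antitone {x : ℝ} (hx0 : 0 < x) (hx1 : x < 1) :
    Antitone fun N => ∏ k ∈ Finset.range N, (1 - x * x ^ k) :=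
  antitone_nat_of_succ_le fun N => by
    rw [Finset.prod_range_succ]
    refine mul_le_of_le_one_right (prod_one_sub_pow_pos hx0 hx1 N).le ?_
    have : 0 < x * x ^ N := by positivity
    linarith

theorem invPoch_nonneg {x : ℝ} (hx0 : 0 < x) (hx1 : x < 1) (n : ℤ) : 0 ≤ invPoch x n := by
  unfold invPoch
  split_ifs
  · exact inv_nonneg.mpr (prod_one_sub_pow_pos hx0 hx1 _).le
  · exact le_rfl

theorem invPoch_le {x : ℝ} (hx0 : 0 < x) (hx1 : x < 1) (n : ℤ) :
    invPoch x n ≤ (qPoch x x)⁻¹ := by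
  have hpos := qPoch_self_pos hx0 hx1
  unfold invPoch
  split_ifs
  · exact inv_anti₀ hpos
      ((prod_one_sub_pow_antitone hx0 hx1).le_of_tendsto (tendsto_qPoch x hx0 hx1) _)
  · exact inv_nonneg.mpr hpos.le

theorem tendsto_invPoch {x : ℝ} (hx0 : 0 < x) (hx1 : x < 1) :
    Tendsto (invPoch x) atTop (𝓝 (qPoch x x)⁻¹) := by
  have h1 : Tendsto (fun n : ℤ => n.toNat) atTop atTop :=
    tendsto_atTop_atTop.mpr fun b => ⟨b, fun a ha => by omega⟩
  refine ((tendsto_qPoch x hx0 hx1).inv₀ (qPoch_self_pos hx0 hx1).ne' |>.comp h1).congr' ?_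
  filter_upwards [eventually_ge_atTop 0] with n hn
  simp [invPoch, hn]

/-- **Jacobi triple product identity.** -/
theorem tsum_zpow_mul_zpow_sq {p w : ℝ} (hp0 : 0 < p) (hp1 : p < 1) (hw : w ≠ 0) :
    ∑' n : ℤ, w ^ n * p ^ (n ^ 2) =
      qPoch (p ^ 2) (p ^ 2) * (qPoch (-w * p) (p ^ 2) * qPoch (-w⁻¹ * p) (p ^ 2)) := by
  have hP0 : 0 < p ^ 2 := pow_pos hp0 2
  have hP1 : p ^ 2 < 1 := pow_lt_one₀ hp0.le hp1 two_ne_zero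
  set E := qPoch (p ^ 2) (p ^ 2) with hE
  have hEpos : 0 < E := qPoch_self_pos hP0 hP1
  have hlim : Tendsto (fun N : ℕ => ∑' n : ℤ,
      (∏ k ∈ Finset.range (2 * N), (1 - p ^ 2 * (p ^ 2) ^ k)) *
        invPoch (p ^ 2) (N + n) * invPoch (p ^ 2) (N - n) * (w ^ n * p ^ (n ^ 2))) atTop
      (𝓝 (∑' n : ℤ, E * E⁻¹ * E⁻¹ * (w ^ n * p ^ (n ^ 2)))) := by
    refine tendsto_tsum_of_dominated_convergence
      (bound := fun n : ℤ => E⁻¹ * E⁻¹ * (|w| ^ n * p ^ (n ^ 2)))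
      ((summable_zpow_mul_zpow_sq hp0 hp1 (abs_pos.mpr hw)).mul_left _) (fun n => ?_)
      (Eventually.of_forall fun N n => ?_)
    · refine Tendsto.mul_const _ (Tendsto.mul (Tendsto.mul ?_ ?_) ?_)
      · exact (tendsto_qPoch _ hP0 hP1).comp (tendsto_id.const_mul_atTop' two_pos)
      · exact (tendsto_invPoch hP0 hP1).comp
          (tendsto_atTop_add_const_right _ n tendsto_natCast_atTop_atTop)
      · simp only [sub_eq_add_neg]
        exact (tendsto_invPoch hP0 hP1).comp
          (tendsto_atTop_add_const_right _ (-n) tendsto_natCast_atTop_atTop)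
    · have h1 := (prod_one_sub_pow_pos hP0 hP1 (2 * N)).le
      have h2 : ∏ k ∈ Finset.range (2 * N), (1 - p ^ 2 * (p ^ 2) ^ k) ≤ 1 := by
        simpa using prod_one_sub_pow_antitone hP0 hP1 (Nat.zero_le (2 * N))
      have h3 := invPoch_nonneg hP0 hP1 (N + n)
      have h4 := invPoch_nonneg hP0 hP1 (N - n)
      rw [norm_mul, norm_mul, norm_mul, Real.norm_of_nonneg h1, Real.norm_of_nonneg h3,
        Real.norm_of_nonneg h4, norm_mul, norm_zpow, norm_zpow, Real.norm_of_nonneg hp0.le,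
        Real.norm_eq_abs w]
      refine mul_le_mul_of_nonneg_right ?_ (by positivity)
      refine mul_le_mul ?_ (invPoch_le hP0 hP1 _) h4 (by positivity)
      exact (mul_le_of_le_one_left h3 h2).trans (invPoch_le hP0 hP1 _)
  have hprod : Tendsto (fun N : ℕ => ∏ k ∈ Finset.range N,
      (1 + w * p ^ (2 * k + 1)) * (1 + w⁻¹ * p ^ (2 * k + 1))) atTop
      (𝓝 (qPoch (-w * p) (p ^ 2) * qPoch (-w⁻¹ * p) (p ^ 2))) := by
    refine ((tendsto_qPoch (-w * p) hP0 hP1).mul (tendsto_qPoch (-w⁻¹ * p) hP0 hP1)).congr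
      fun N => ?_
    rw [← Finset.prod_mul_distrib]
    refine Finset.prod_congr rfl fun k _ => ?_
    ring
  simp only [(hasSum_finite_jacobi hp0 hp1 hw _).tsum_eq] at hlim
  rw [← tendsto_nhds_unique hlim hprod, tsum_mul_left]
  field_simp

/-- The theta series `∑ εⁿ q^(κ (n + d)²)`. -/
noncomputable def thetaSum (ε q κ d : ℝ) : ℝ := ∑' n : ℤ, ε ^ n * q ^ (κ * (n + d) ^ 2)

theorem thetaSum_term {q : ℝ} (hq0 : 0 < q) (ε κ d : ℝ) (n : ℤ) :
    ε ^ n * q ^ (κ * (n + d) ^ 2) =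
      q ^ (κ * d ^ 2) * ((ε * q ^ (2 * κ * d)) ^ n * (q ^ κ) ^ (n ^ 2)) := by
  rw [mul_zpow, ← Real.rpow_intCast (q ^ (2 * κ * d)), ← Real.rpow_intCast (q ^ κ),
    ← Real.rpow_mul hq0.le, ← Real.rpow_mul hq0.le, mul_assoc (ε ^ n), ← Real.rpow_add hq0,
    mul_left_comm, ← Real.rpow_add hq0]
  push_cast
  ring_nf

theorem summable_norm_thetaSum {q ε κ : ℝ} (hq0 : 0 < q) (hq1 : q < 1) (hε : ε ^ 2 = 1)
    (hκ : 0 < κ) (d : ℝ) : Summable fun n : ℤ => ‖ε ^ n * q ^ (κ * (n + d) ^ 2)‖ := by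
  have hε' : |ε| = 1 := by
    have := sq_abs ε
    nlinarith [abs_nonneg ε]
  have h : ∀ n : ℤ, ‖ε ^ n * q ^ (κ * (n + d) ^ 2)‖ =
      q ^ (κ * d ^ 2) * ((q ^ (2 * κ * d)) ^ n * (q ^ κ) ^ (n ^ 2)) := fun n => by
    rw [thetaSum_term hq0, norm_mul, norm_mul, norm_zpow, norm_mul, norm_zpow,
      Real.norm_of_nonneg (Real.rpow_nonneg hq0.le _), Real.norm_of_nonneg (Real.rpow_nonneg hq0.le _),
      Real.norm_of_nonneg (Real.rpow_nonneg hq0.le _), Real.norm_eq_abs, hε', one_mul]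
  simp only [h]
  exact (summable_zpow_mul_zpow_sq (Real.rpow_pos_of_pos hq0 _)
    (Real.rpow_lt_one hq0.le hq1 hκ) (Real.rpow_pos_of_pos hq0 _)).mul_left _

theorem thetaSum_eq_qPoch {q ε κ : ℝ} (hq0 : 0 < q) (hq1 : q < 1) (hε : ε ^ 2 = 1)
    (hκ : 0 < κ) (d : ℝ) :
    thetaSum ε q κ d = q ^ (κ * d ^ 2) * (qPoch (q ^ (2 * κ)) (q ^ (2 * κ)) *
      (qPoch (-ε * q ^ (κ * (1 + 2 * d))) (q ^ (2 * κ)) *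
        qPoch (-ε * q ^ (κ * (1 - 2 * d))) (q ^ (2 * κ)))) := by
  have hε0 : ε ≠ 0 := by rintro rfl; norm_num at hε
  have hinv : ε⁻¹ = ε := inv_eq_of_mul_eq_one_right (by rw [← sq, hε])
  have h1 : (q ^ κ) ^ 2 = q ^ (2 * κ) := by
    rw [mul_comm, Real.rpow_mul hq0.le]; norm_cast
  have h2 : -(ε * q ^ (2 * κ * d)) * q ^ κ = -ε * q ^ (κ * (1 + 2 * d)) := by
    rw [neg_mul, neg_mul, mul_assoc, ← Real.rpow_add hq0]; ring_nf
  have h3 : -(ε * q ^ (2 * κ * d))⁻¹ * q ^ κ = -ε * q ^ (κ * (1 - 2 * d)) := by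
    rw [neg_mul, neg_mul, mul_inv, hinv, mul_assoc, ← Real.rpow_neg hq0.le, ← Real.rpow_add hq0]
    ring_nf
  simp only [thetaSum, thetaSum_term hq0]
  rw [tsum_mul_left, tsum_zpow_mul_zpow_sq (Real.rpow_pos_of_pos hq0 _)
    (Real.rpow_lt_one hq0.le hq1 hκ) (mul_ne_zero hε0 (Real.rpow_pos_of_pos hq0 _).ne'),
    h1, h2, h3]

theorem thetaSum_add_one {ε : ℝ} (hε : ε ^ 2 = 1) (q κ d : ℝ) :
    thetaSum ε q κ (d + 1) = ε * thetaSum ε q κ d := by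
  have hε0 : ε ≠ 0 := by rintro rfl; norm_num at hε
  unfold thetaSum
  rw [← (Equiv.addRight (1 : ℤ)).tsum_eq fun n : ℤ => ε ^ n * q ^ (κ * (n + d) ^ 2),
    ← tsum_mul_left]
  refine tsum_congr fun n => ?_
  rw [Equiv.coe_addRight, zpow_add_one₀ hε0]
  push_cast
  rw [show (n : ℝ) + 1 + d = n + (d + 1) by ring]
  linear_combination (-(ε ^ n * q ^ (κ * ((n : ℝ) + (d + 1)) ^ 2))) * hε

theorem thetaSum_neg {ε : ℝ} (hε : ε ^ 2 = 1) (q κ d : ℝ) :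
    thetaSum ε q κ (-d) = thetaSum ε q κ d := by
  have hinv : ε⁻¹ = ε := inv_eq_of_mul_eq_one_right (by rw [← sq, hε])
  unfold thetaSum
  rw [← (Equiv.neg ℤ).tsum_eq fun n : ℤ => ε ^ n * q ^ (κ * (n + d) ^ 2)]
  refine tsum_congr fun n => ?_
  rw [Equiv.neg_apply, zpow_neg, ← inv_zpow, hinv]
  push_cast
  rw [show (-(n : ℝ) + d) ^ 2 = (n + -d) ^ 2 by ring]

theorem thetaSum_pow {q : ℝ} (hq0 : 0 < q) (ε κ d : ℝ) (k : ℕ) :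
    thetaSum ε (q ^ k) κ d = thetaSum ε q (k * κ) d := by
  unfold thetaSum
  refine tsum_congr fun n => ?_
  rw [← Real.rpow_natCast q k, ← Real.rpow_mul hq0.le, mul_assoc]

theorem summable_thetaSum_mul {q ε ε' κ κ' : ℝ} (hq0 : 0 < q) (hq1 : q < 1) (hε : ε ^ 2 = 1)
    (hε' : ε' ^ 2 = 1) (hκ : 0 < κ) (hκ' : 0 < κ') (d d' : ℝ) :
    Summable fun p : ℤ × ℤ =>
      ε ^ p.1 * ε' ^ p.2 * q ^ (κ * (p.1 + d) ^ 2 + κ' * (p.2 + d') ^ 2) := by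
  refine (summable_mul_of_summable_norm (summable_norm_thetaSum hq0 hq1 hε hκ d)
    (summable_norm_thetaSum hq0 hq1 hε' hκ' d')).congr fun p => ?_
  rw [Real.rpow_add hq0]
  ring

theorem thetaSum_mul {q ε ε' κ κ' : ℝ} (hq0 : 0 < q) (hq1 : q < 1) (hε : ε ^ 2 = 1)
    (hε' : ε' ^ 2 = 1) (hκ : 0 < κ) (hκ' : 0 < κ') (d d' : ℝ) :
    thetaSum ε q κ d * thetaSum ε' q κ' d' = ∑' p : ℤ × ℤ,
      ε ^ p.1 * ε' ^ p.2 * q ^ (κ * (p.1 + d) ^ 2 + κ' * (p.2 + d') ^ 2) := by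
  unfold thetaSum
  rw [tsum_mul_tsum_of_summable_norm (summable_norm_thetaSum hq0 hq1 hε hκ d)
    (summable_norm_thetaSum hq0 hq1 hε' hκ' d')]
  refine tsum_congr fun p => ?_
  rw [Real.rpow_add hq0]
  ring

theorem tsum_int_dissect (N : ℕ) [NeZero N] {F : ℤ → ℝ} (hF : Summable F) :
    ∑' n, F n = ∑ c : Fin N, ∑' n : ℤ, F (N * n + (c : ℕ)) := by
  let e := (Equiv.prodComm (Fin N) ℤ).trans (Int.divModEquiv N).symm
  have hs : Summable (F ∘ e) := e.summable_iff.mpr hF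
  rw [← e.tsum_eq F, ← tsum_fintype (L := .unconditional _)]
  refine (hs.tsum_prod).trans (tsum_congr fun c => tsum_congr fun n => ?_)
  simp [e, mul_comm]

/-- Summing over `ℤ × ℤ` along the lines `a x + y ≡ c (mod N)`. -/
theorem tsum_int_prod_dissect (N : ℕ) [NeZero N] (a : ℤ) {F : ℤ × ℤ → ℝ} (hF : Summable F) :
    ∑' p, F p = ∑ c : Fin N, ∑' p : ℤ × ℤ, F (p.2, N * p.1 + (c : ℕ) - a * p.2) := by
  let s : ℤ × ℤ ≃ ℤ × ℤ :=
    { toFun := fun p => (p.2, p.1 - a * p.2)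
      invFun := fun p => (p.2 + a * p.1, p.1)
      left_inv := fun p => by simp
      right_inv := fun p => by simp }
  let e : Fin N × (ℤ × ℤ) ≃ ℤ × ℤ := (Equiv.prodAssoc (Fin N) ℤ ℤ).symm.trans
    ((((Equiv.prodComm (Fin N) ℤ).trans (Int.divModEquiv N).symm).prodCongr
      (Equiv.refl ℤ)).trans s)
  have hs : Summable (F ∘ e) := e.summable_iff.mpr hF
  rw [← e.tsum_eq F, ← tsum_fintype (L := .unconditional _)]
  refine (hs.tsum_prod).trans (tsum_congr fun c => tsum_congr fun p => ?_)
  simp [e, s, mul_comm]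

theorem tsum_int_prod_shear (a : ℤ) (F : ℤ × ℤ → ℝ) :
    ∑' p, F p = ∑' p : ℤ × ℤ, F (p.1, p.2 + a * p.1) := by
  let s : ℤ × ℤ ≃ ℤ × ℤ :=
    { toFun := fun p => (p.1, p.2 + a * p.1)
      invFun := fun p => (p.1, p.2 - a * p.1)
      left_inv := fun p => by simp
      right_inv := fun p => by simp }
  exact (s.tsum_eq F).symm

theorem zpow_two_mul_of_sq_eq_one {ε : ℝ} (hε : ε ^ 2 = 1) (n : ℤ) : ε ^ (2 * n) = 1 := by
  rw [zpow_mul, show ε ^ (2 : ℤ) = 1 by exact_mod_cast hε, one_zpow]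

theorem thetaSum_sq {q ε κ : ℝ} (hq0 : 0 < q) (hq1 : q < 1) (hε : ε ^ 2 = 1) (hκ : 0 < κ)
    (h : ℝ) : thetaSum ε q κ h ^ 2 = ∑ c : Fin 5, ε ^ (c : ℕ) *
      (thetaSum ε q (5 * κ) (((c : ℕ) + 3 * h) / 5) *
        thetaSum ε q (5 * κ) ((-2 * (c : ℕ) - h) / 5)) := by
  have hε0 : ε ≠ 0 := by rintro rfl; norm_num at hε
  have hκ5 : 0 < 5 * κ := by linarith
  rw [sq, thetaSum_mul hq0 hq1 hε hε hκ hκ,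
    tsum_int_prod_dissect 5 2 (summable_thetaSum_mul hq0 hq1 hε hε hκ hκ h h)]
  refine Finset.sum_congr rfl fun c _ => ?_
  rw [tsum_int_prod_shear 2, thetaSum_mul hq0 hq1 hε hε hκ5 hκ5, ← tsum_mul_left]
  refine tsum_congr fun p => ?_
  obtain ⟨i, j⟩ := p
  have hsign : ε ^ (j + 2 * i) * ε ^ (((5 : ℕ) : ℤ) * i + (c : ℕ) - 2 * (j + 2 * i)) =
      ε ^ (c : ℕ) * (ε ^ i * ε ^ j) := by
    rw [← zpow_natCast ε (c : ℕ), ← zpow_add₀ hε0, ← zpow_add₀ hε0, ← zpow_add₀ hε0,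
      show j + 2 * i + (((5 : ℕ) : ℤ) * i + (c : ℕ) - 2 * (j + 2 * i)) =
        (c : ℕ) + (i + j) + 2 * (i - j) by push_cast; ring,
      zpow_add₀ hε0 _ (2 * (i - j)), zpow_two_mul_of_sq_eq_one hε, mul_one]
  simp only [hsign, mul_assoc]
  push_cast
  ring_nf

theorem thetaSum_zero_eq {q ε κ : ℝ} (hq0 : 0 < q) (hq1 : q < 1) (hε : ε ^ 2 = 1) (hκ : 0 < κ) :
    thetaSum ε q κ 0 = thetaSum 1 q (4 * κ) 0 + ε * thetaSum 1 q (4 * κ) (1 / 2) := by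
  have hε0 : ε ≠ 0 := by rintro rfl; norm_num at hε
  have := tsum_int_dissect 2 (summable_norm_thetaSum hq0 hq1 hε hκ 0).of_norm
  rw [Fin.sum_univ_two] at this
  unfold thetaSum
  rw [this, ← tsum_mul_left]
  congr 1 <;> refine tsum_congr fun n => ?_
  · simp only [Fin.val_zero, Nat.cast_zero, add_zero, Nat.cast_ofNat, one_zpow, one_mul]
    rw [zpow_two_mul_of_sq_eq_one hε]
    push_cast
    ring_nf
  · simp only [Fin.val_one, Nat.cast_one, Nat.cast_ofNat, one_zpow, one_mul]
    rw [zpow_add_one₀ hε0, zpow_two_mul_of_sq_eq_one hε]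
    push_cast
    ring_nf

theorem thetaSum_neg_one_half (q κ : ℝ) : thetaSum (-1) q κ (1 / 2) = 0 := by
  have h1 := thetaSum_neg (ε := -1) (by norm_num) q κ (1 / 2)
  have h2 := thetaSum_add_one (ε := -1) (by norm_num) q κ (-(1 / 2))
  rw [show (-(1 / 2) : ℝ) + 1 = 1 / 2 by norm_num] at h2
  linarith

theorem thetaSum_mul_sub_eq_sum {q : ℝ} (hq0 : 0 < q) (hq1 : q < 1) :
    thetaSum 1 q 1 (1 / 2) * thetaSum 1 q 5 0 - thetaSum 1 q 1 0 * thetaSum 1 q 5 (1 / 2) =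
      ∑ c : Fin 3, thetaSum (-1) q (15 / 2) ((2 * (c : ℕ) + 1) / 6) *
        thetaSum (-1) q (3 / 2) ((2 * (c : ℕ) + 1) / 6) := by
  have h1 : (1 : ℝ) ^ 2 = 1 := one_pow 2
  have h2 : (-1 : ℝ) ^ 2 = 1 := by norm_num
  rw [mul_comm (thetaSum 1 q 1 (1 / 2)), mul_comm (thetaSum 1 q 1 0),
    thetaSum_mul hq0 hq1 h1 h1 (by norm_num) (by norm_num),
    thetaSum_mul hq0 hq1 h1 h1 (by norm_num) (by norm_num),
    tsum_int_prod_dissect 3 1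
      (summable_thetaSum_mul hq0 hq1 h1 h1 (by norm_num) (by norm_num) _ _),
    tsum_int_prod_dissect 3 1
      (summable_thetaSum_mul hq0 hq1 h1 h1 (by norm_num) (by norm_num) _ _),
    ← Finset.sum_sub_distrib]
  refine Finset.sum_congr rfl fun c _ => ?_
  have hs := summable_thetaSum_mul hq0 hq1 h2 h2 (κ := 15 / 2) (κ' := 3 / 2) (by norm_num)
    (by norm_num) ((2 * (c : ℕ) + 1) / 6) ((2 * (c : ℕ) + 1) / 6)
  rw [thetaSum_mul hq0 hq1 h2 h2 (by norm_num) (by norm_num),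
    tsum_int_prod_dissect 2 (-1) hs, Fin.sum_univ_two, sub_eq_add_neg, ← tsum_neg]
  let e (b : ℤ) : ℤ × ℤ ≃ ℤ × ℤ :=
    { toFun := fun p => (-p.2 - b, p.1)
      invFun := fun p => (p.2, -p.1 - b)
      left_inv := fun p => by simp
      right_inv := fun p => by simp }
  have h0 : (-1 : ℝ) ≠ 0 := by norm_num
  have hsign (m n : ℤ) : (-1 : ℝ) ^ n * (-1 : ℝ) ^ (2 * m + n) = 1 := by
    rw [← zpow_add₀ h0, show n + (2 * m + n) = 2 * (m + n) by ring,
      zpow_two_mul_of_sq_eq_one h2]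
  have hsign' (m n : ℤ) : (-1 : ℝ) ^ n * (-1 : ℝ) ^ (2 * m + 1 + n) = -1 := by
    rw [add_right_comm, zpow_add_one₀ h0, ← mul_assoc, hsign, one_mul]
  congr 1
  · refine Eq.trans ?_ ((e 0).tsum_eq _)
    refine tsum_congr fun p => ?_
    simp only [e, Equiv.coe_fn_mk, Fin.val_zero, Nat.cast_zero, add_zero, one_zpow,
      neg_one_mul, sub_neg_eq_add, Nat.cast_ofNat, hsign]
    push_cast
    ring_nf
  · refine Eq.trans ?_ ((e 1).tsum_eq _)
    refine tsum_congr fun p => ?_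
    simp only [e, Equiv.coe_fn_mk, Fin.val_one, Nat.cast_one, one_zpow,
      neg_one_mul, sub_neg_eq_add, Nat.cast_ofNat, hsign']
    push_cast
    ring_nf

theorem thetaSum_mul_sub {q : ℝ} (hq0 : 0 < q) (hq1 : q < 1) :
    thetaSum 1 q 1 (1 / 2) * thetaSum 1 q 5 0 - thetaSum 1 q 1 0 * thetaSum 1 q 5 (1 / 2) =
      2 * (thetaSum (-1) q (3 / 2) (1 / 6) * thetaSum (-1) q (15 / 2) (1 / 6)) := by
  have h (κ : ℝ) : thetaSum (-1) q κ (5 / 6) = -thetaSum (-1) q κ (1 / 6) := by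
    have h1 := thetaSum_neg (ε := -1) (by norm_num) q κ (1 / 6)
    have h2 := thetaSum_add_one (ε := -1) (by norm_num) q κ (-(1 / 6))
    rw [show (-(1 / 6) : ℝ) + 1 = 5 / 6 by norm_num, h1] at h2
    linarith
  rw [thetaSum_mul_sub_eq_sum hq0 hq1, Fin.sum_univ_three]
  norm_num only [Fin.val_zero, Fin.val_one, Fin.val_two, Nat.cast_zero, Nat.cast_one,
    Nat.cast_ofNat]
  rw [thetaSum_neg_one_half, h, h]
  ring

theorem thetaSum_neg_one_sq {q : ℝ} (hq0 : 0 < q) (hq1 : q < 1) :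
    thetaSum (-1) q 1 0 ^ 2 = thetaSum (-1) q 5 0 ^ 2 -
      4 * (thetaSum (-1) q 5 (1 / 5) * thetaSum (-1) q 5 (2 / 5)) := by
  have hadd (d : ℝ) := thetaSum_add_one (ε := -1) (by norm_num) q 5 d
  have hneg (d : ℝ) := thetaSum_neg (ε := -1) (by norm_num) q 5 d
  have e3 := hadd (-(2 / 5))
  have e4 := hadd (-(1 / 5))
  have e6 := hadd (-(6 / 5))
  have e6' := hadd (1 / 5)
  have e8 := hadd (-(8 / 5))
  have e8' := hadd (3 / 5)
  norm_num only [hneg] at e3 e4 e6 e6' e8 e8'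
  rw [thetaSum_sq hq0 hq1 (by norm_num) one_pos, Fin.sum_univ_five]
  norm_num only [Fin.val_zero, Fin.val_one, Fin.val_two, Nat.cast_zero, Nat.cast_one,
    Nat.cast_ofNat, show ((3 : Fin 5) : ℕ) = 3 from rfl, show ((4 : Fin 5) : ℕ) = 4 from rfl]
  norm_num only [hneg, e3, e4, e6', e8', e8]
  ring

theorem thetaSum_one_sq {q : ℝ} (hq0 : 0 < q) (hq1 : q < 1) :
    thetaSum 1 q (1 / 2) (1 / 2) ^ 2 = thetaSum 1 q (5 / 2) (1 / 2) ^ 2 +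
      4 * (thetaSum 1 q (5 / 2) (1 / 10) * thetaSum 1 q (5 / 2) (3 / 10)) := by
  have hadd (d : ℝ) := thetaSum_add_one (ε := 1) (by norm_num) q (5 / 2) d
  have hneg (d : ℝ) := thetaSum_neg (ε := 1) (by norm_num) q (5 / 2) d
  have e7 := hadd (-(3 / 10))
  have e9 := hadd (-(1 / 10))
  have e11 := hadd (1 / 10)
  have e13 := hadd (3 / 10)
  have e17 := hadd (7 / 10)
  norm_num only [hneg, one_mul] at e7 e9 e11 e13 e17
  rw [thetaSum_sq hq0 hq1 (by norm_num) (by norm_num), Fin.sum_univ_five]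
  norm_num only [Fin.val_zero, Fin.val_one, Fin.val_two, Nat.cast_zero, Nat.cast_one,
    Nat.cast_ofNat, show ((3 : Fin 5) : ℕ) = 3 from rfl, show ((4 : Fin 5) : ℕ) = 4 from rfl]
  norm_num only [hneg, e7, e9, e11, e13, e17]
  ring

/-- `q^(1/24) (q; q)_∞`, the Dedekind eta function in terms of its nome. -/
noncomputable def etaNome (q : ℝ) : ℝ := q ^ (1 / 24 : ℝ) * qPoch q q

theorem etaNome_pos {q : ℝ} (hq0 : 0 < q) (hq1 : q < 1) : 0 < etaNome q :=
  mul_pos (Real.rpow_pos_of_pos hq0 _) (qPoch_self_pos hq0 hq1)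

theorem rpow_div_24 {q : ℝ} (hq0 : 0 < q) (k : ℕ) :
    q ^ ((k : ℝ) / 24) = (q ^ (1 / 24 : ℝ)) ^ k := by
  rw [← Real.rpow_natCast, ← Real.rpow_mul hq0.le]
  ring_nf

theorem etaNome_pow {q : ℝ} (hq0 : 0 < q) (k : ℕ) :
    etaNome (q ^ k) = (q ^ (1 / 24 : ℝ)) ^ k * qPoch (q ^ k) (q ^ k) := by
  rw [etaNome, ← rpow_div_24 hq0, ← Real.rpow_natCast q k, ← Real.rpow_mul hq0.le]
  ring_nf

theorem thetaSum_one_sixth {q : ℝ} (hq0 : 0 < q) (hq1 : q < 1) :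
    thetaSum (-1) q (3 / 2) (1 / 6) = etaNome q := by
  have ht := thetaSum_eq_qPoch hq0 hq1 (ε := -1) (κ := 3 / 2) (by norm_num) (by norm_num) (1 / 6)
  have hd := qPoch_dissect q hq0 hq1 (k := 3) (by norm_num)
  simp only [Finset.prod_range_succ, Finset.prod_range_zero] at hd
  norm_num at ht hd
  rw [← sq, ← pow_succ'] at hd
  norm_num at hd
  norm_num [etaNome]
  rw [hd, ht]
  ring

theorem fneg_eq_qPoch {q : ℝ} (hq0 : 0 < q) (hq1 : q < 1) : fneg q = qPoch q q := by
  have hs : q ^ (1 / 24 : ℝ) * fneg q = thetaSum (-1) q (3 / 2) (-(1 / 6)) := by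
    rw [fneg, thetaSum, ← tsum_mul_left]
    refine tsum_congr fun n => ?_
    obtain ⟨m, hm⟩ : (2 : ℤ) ∣ n * (3 * n - 1) := by
      rcases Int.even_or_odd' n with ⟨k, rfl | rfl⟩
      · exact ⟨k * (3 * (2 * k) - 1), by ring⟩
      · exact ⟨(2 * k + 1) * (3 * k + 1), by ring⟩
    rw [hm, Int.mul_ediv_cancel_left _ two_ne_zero, ← Real.rpow_intCast q m, mul_left_comm,
      ← Real.rpow_add hq0]
    have hm' : (n : ℝ) * (3 * n - 1) = 2 * m := by exact_mod_cast hm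
    congr 2
    linear_combination (-1 / 2 : ℝ) * hm'
  rw [thetaSum_neg (by norm_num), thetaSum_one_sixth hq0 hq1, etaNome] at hs
  exact mul_left_cancel₀ (Real.rpow_pos_of_pos hq0 _).ne' hs

theorem qPoch_two {q : ℝ} (hq0 : 0 < q) (hq1 : q < 1) :
    qPoch q q = qPoch q (q ^ 2) * qPoch (q ^ 2) (q ^ 2) := by
  have hd := qPoch_dissect q hq0 hq1 (k := 2) (by norm_num)
  simpa [Finset.prod_range_succ, ← sq] using hd

theorem thetaSum_neg_one_zero {q : ℝ} (hq0 : 0 < q) (hq1 : q < 1) :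
    thetaSum (-1) q 1 0 * etaNome (q ^ 2) = etaNome q ^ 2 := by
  have ht := thetaSum_eq_qPoch hq0 hq1 (ε := -1) (κ := 1) (by norm_num) (by norm_num) 0
  norm_num at ht
  rw [ht, etaNome_pow hq0, etaNome, qPoch_two hq0 hq1]
  ring

theorem thetaSum_one_zero {q : ℝ} (hq0 : 0 < q) (hq1 : q < 1) :
    thetaSum 1 q 1 0 * (etaNome q ^ 2 * etaNome (q ^ 4) ^ 2) = etaNome (q ^ 2) ^ 5 := by
  have ht := thetaSum_eq_qPoch hq0 hq1 (ε := 1) (κ := 1) (by norm_num) (by norm_num) 0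
  norm_num at ht
  have hq2 := pow_pos hq0 2
  have hq2' : q ^ 2 < 1 := pow_lt_one₀ hq0.le hq1 two_ne_zero
  have h1 := qPoch_two hq0 hq1
  have h2 := qPoch_two hq2 hq2'
  have h3 := qPoch_mul_qPoch_neg q hq2 hq2'
  rw [← pow_mul] at h2 h3
  norm_num at h2 h3
  have h4 : qPoch q q * qPoch (-q) (q ^ 2) * qPoch (q ^ 4) (q ^ 4) = qPoch (q ^ 2) (q ^ 2) ^ 2 := by
    linear_combination qPoch (-q) (q ^ 2) * qPoch (q ^ 4) (q ^ 4) * h1 +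
      qPoch (q ^ 2) (q ^ 2) * qPoch (q ^ 4) (q ^ 4) * h3 - qPoch (q ^ 2) (q ^ 2) * h2
  rw [ht, etaNome_pow hq0, etaNome_pow hq0, etaNome]
  linear_combination (q ^ (1 / 24 : ℝ)) ^ 10 * qPoch (q ^ 2) (q ^ 2) *
    (qPoch q q * qPoch (-q) (q ^ 2) * qPoch (q ^ 4) (q ^ 4) + qPoch (q ^ 2) (q ^ 2) ^ 2) * h4

theorem thetaSum_one_half {q : ℝ} (hq0 : 0 < q) (hq1 : q < 1) :
    thetaSum 1 q (1 / 2) (1 / 2) * etaNome q = 2 * etaNome (q ^ 2) ^ 2 := by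
  have ht := thetaSum_eq_qPoch hq0 hq1 (ε := 1) (κ := 1 / 2) (by norm_num) (by norm_num) (1 / 2)
  rw [show (1 / 2 * (1 / 2) ^ 2 : ℝ) = ((3 : ℕ) : ℝ) / 24 by norm_num, rpow_div_24 hq0] at ht
  norm_num at ht
  have h1 := qPoch_mul_qPoch_neg q hq0 hq1
  have h2 := qPoch_eq_mul (-1) hq0 hq1
  norm_num at h2
  rw [ht, h2, etaNome_pow hq0, etaNome, ← h1]
  norm_num
  ring

theorem qPoch_neg_five {q : ℝ} (hq0 : 0 < q) (hq1 : q < 1) :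
    qPoch (-q) q = qPoch (-q) (q ^ 5) * qPoch (-q ^ 2) (q ^ 5) * qPoch (-q ^ 3) (q ^ 5) *
      qPoch (-q ^ 4) (q ^ 5) * qPoch (-q ^ 5) (q ^ 5) := by
  rw [qPoch_dissect (-q) hq0 hq1 (k := 5) (by norm_num)]
  simp only [Finset.prod_range_succ, Finset.prod_range_zero]
  ring_nf

theorem thetaSum_tenths {q : ℝ} (hq0 : 0 < q) (hq1 : q < 1) :
    thetaSum 1 q (5 / 2) (1 / 10) * thetaSum 1 q (5 / 2) (3 / 10) *
      (etaNome q * etaNome (q ^ 10)) = etaNome (q ^ 2) * etaNome (q ^ 5) ^ 3 := by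
  have ht1 := thetaSum_eq_qPoch hq0 hq1 (ε := 1) (κ := 5 / 2) (by norm_num) (by norm_num) (1 / 10)
  have ht3 := thetaSum_eq_qPoch hq0 hq1 (ε := 1) (κ := 5 / 2) (by norm_num) (by norm_num) (3 / 10)
  have hr : q ^ (5 / 2 * (1 / 10) ^ 2 : ℝ) * q ^ (5 / 2 * (3 / 10) ^ 2 : ℝ) =
      (q ^ (1 / 24 : ℝ)) ^ 6 := by
    rw [← Real.rpow_add hq0, ← rpow_div_24 hq0]
    norm_num
  generalize q ^ (5 / 2 * (1 / 10) ^ 2 : ℝ) = r1 at ht1 hr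
  generalize q ^ (5 / 2 * (3 / 10) ^ 2 : ℝ) = r3 at ht3 hr
  norm_num at ht1 ht3
  have hq5 := pow_pos hq0 5
  have hq5' : q ^ 5 < 1 := pow_lt_one₀ hq0.le hq1 (by norm_num)
  have h1 := qPoch_mul_qPoch_neg q hq0 hq1
  have h5 := qPoch_mul_qPoch_neg (q ^ 5) hq5 hq5'
  rw [← pow_mul] at h5
  norm_num at h5
  rw [ht1, ht3, etaNome_pow hq0, etaNome_pow hq0, etaNome_pow hq0, etaNome, ← h1, ← h5,
    qPoch_neg_five hq0 hq1]
  generalize q ^ (1 / 24 : ℝ) = t at *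
  generalize qPoch (-q ^ 5) (q ^ 5) = a
  generalize qPoch (-q ^ 4) (q ^ 5) = b
  generalize qPoch (-q ^ 3) (q ^ 5) = c
  generalize qPoch (-q ^ 2) (q ^ 5) = d
  generalize qPoch (-q) (q ^ 5) = e
  generalize qPoch q q = f
  generalize qPoch (q ^ 5) (q ^ 5) = g
  linear_combination (t ^ 11 * a * b * c * d * e * f * g ^ 3) * hr

theorem qPoch_odd_five {q : ℝ} (hq0 : 0 < q) (hq1 : q < 1) :
    qPoch q (q ^ 2) = qPoch q (q ^ 10) * qPoch (q ^ 3) (q ^ 10) * qPoch (q ^ 5) (q ^ 10) *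
      qPoch (q ^ 7) (q ^ 10) * qPoch (q ^ 9) (q ^ 10) := by
  rw [qPoch_dissect q (pow_pos hq0 2) (pow_lt_one₀ hq0.le hq1 two_ne_zero) (k := 5) (by norm_num)]
  simp only [Finset.prod_range_succ, Finset.prod_range_zero]
  ring_nf

theorem thetaSum_fifths {q : ℝ} (hq0 : 0 < q) (hq1 : q < 1) :
    thetaSum (-1) q 5 (1 / 5) * thetaSum (-1) q 5 (2 / 5) *
      (etaNome (q ^ 2) * etaNome (q ^ 5)) = etaNome q * etaNome (q ^ 10) ^ 3 := by
  have ht1 := thetaSum_eq_qPoch hq0 hq1 (ε := -1) (κ := 5) (by norm_num) (by norm_num) (1 / 5)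
  have ht2 := thetaSum_eq_qPoch hq0 hq1 (ε := -1) (κ := 5) (by norm_num) (by norm_num) (2 / 5)
  have hr : q ^ (5 * (1 / 5) ^ 2 : ℝ) * q ^ (5 * (2 / 5) ^ 2 : ℝ) =
      (q ^ (1 / 24 : ℝ)) ^ 24 := by
    rw [← Real.rpow_add hq0, ← rpow_div_24 hq0]
    norm_num
  generalize q ^ (5 * (1 / 5) ^ 2 : ℝ) = r1 at ht1 hr
  generalize q ^ (5 * (2 / 5) ^ 2 : ℝ) = r2 at ht2 hr
  norm_num at ht1 ht2
  have h5 := qPoch_two (pow_pos hq0 5) (pow_lt_one₀ hq0.le hq1 (by norm_num))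
  rw [← pow_mul] at h5
  norm_num at h5
  rw [ht1, ht2, etaNome_pow hq0, etaNome_pow hq0, etaNome_pow hq0, etaNome, qPoch_two hq0 hq1, h5,
    qPoch_odd_five hq0 hq1]
  generalize q ^ (1 / 24 : ℝ) = t at *
  generalize qPoch (q ^ 9) (q ^ 10) = a
  generalize qPoch (q ^ 7) (q ^ 10) = b
  generalize qPoch (q ^ 3) (q ^ 10) = c
  generalize qPoch (q ^ 5) (q ^ 10) = d
  generalize qPoch q (q ^ 10) = e
  generalize qPoch (q ^ 2) (q ^ 2) = f
  generalize qPoch (q ^ 10) (q ^ 10) = g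
  linear_combination (t ^ 7 * a * b * c * d * e * f * g ^ 3) * hr

theorem etaNome_relation_half {q : ℝ} (hq0 : 0 < q) (hq1 : q < 1) :
    etaNome (q ^ 2) ^ 4 * etaNome (q ^ 5) ^ 2 * etaNome (q ^ 10) =
      etaNome q ^ 2 * etaNome (q ^ 10) ^ 5 +
        etaNome q * etaNome (q ^ 2) * etaNome (q ^ 5) ^ 5 := by
  have h := thetaSum_one_sq hq0 hq1
  have h1 := thetaSum_one_half hq0 hq1
  have h5 := thetaSum_one_half (pow_pos hq0 5) (pow_lt_one₀ hq0.le hq1 (by norm_num))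
  have hz := thetaSum_tenths hq0 hq1
  rw [thetaSum_pow hq0, ← pow_mul] at h5
  norm_num at h h1 h5 hz ⊢
  generalize thetaSum 1 q (1 / 2) (1 / 2) = X at *
  generalize thetaSum 1 q (5 / 2) (1 / 2) = X5 at *
  generalize thetaSum 1 q (5 / 2) (1 / 10) = Z at *
  generalize thetaSum 1 q (5 / 2) (3 / 10) = W at *
  generalize etaNome q = e1 at *
  generalize etaNome (q ^ 2) = e2 at *
  generalize etaNome (q ^ 5) = g1 at *
  generalize etaNome (q ^ 10) = g2 at *
  linear_combination (e1 ^ 2 * g1 ^ 2 * g2 / 4) * h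
    - (g1 ^ 2 * g2 / 4) * (X * e1 + 2 * e2 ^ 2) * h1
    + (e1 ^ 2 * g2 / 4) * (X5 * g1 + 2 * g2 ^ 2) * h5 + (e1 * g1 ^ 2) * hz

theorem etaNome_relation_zero {q : ℝ} (hq0 : 0 < q) (hq1 : q < 1) :
    etaNome q ^ 4 * etaNome (q ^ 5) * etaNome (q ^ 10) ^ 2 =
      etaNome (q ^ 2) ^ 2 * etaNome (q ^ 5) ^ 5 -
        4 * (etaNome q * etaNome (q ^ 2) * etaNome (q ^ 10) ^ 5) := by
  have h := thetaSum_neg_one_sq hq0 hq1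
  have h1 := thetaSum_neg_one_zero hq0 hq1
  have h5 := thetaSum_neg_one_zero (pow_pos hq0 5) (pow_lt_one₀ hq0.le hq1 (by norm_num))
  have hz := thetaSum_fifths hq0 hq1
  rw [thetaSum_pow hq0, ← pow_mul] at h5
  norm_num at h h1 h5 hz ⊢
  generalize thetaSum (-1) q 1 0 = X at *
  generalize thetaSum (-1) q 5 0 = X5 at *
  generalize thetaSum (-1) q 5 (1 / 5) = Z at *
  generalize thetaSum (-1) q 5 (2 / 5) = W at *
  generalize etaNome q = e1 at *
  generalize etaNome (q ^ 2) = e2 at *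
  generalize etaNome (q ^ 5) = g1 at *
  generalize etaNome (q ^ 10) = g2 at *
  linear_combination (e2 ^ 2 * g2 ^ 2 * g1) * h
    - (g2 ^ 2 * g1) * (X * e2 + e1 ^ 2) * h1
    + (e2 ^ 2 * g1) * (X5 * g2 + g1 ^ 2) * h5 - 4 * (e2 * g2 ^ 2) * hz

theorem thetaSum_one_one_half {q : ℝ} (hq0 : 0 < q) (hq1 : q < 1) :
    thetaSum 1 q 1 (1 / 2) * etaNome (q ^ 2) = 2 * etaNome (q ^ 4) ^ 2 := by
  have h := thetaSum_one_half (pow_pos hq0 2) (pow_lt_one₀ hq0.le hq1 two_ne_zero)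
  rw [thetaSum_pow hq0, ← pow_mul] at h
  norm_num at h ⊢
  exact h

theorem thetaSum_mul_sub_eq_etaNome {q : ℝ} (hq0 : 0 < q) (hq1 : q < 1) :
    thetaSum 1 q 1 (1 / 2) * thetaSum 1 q 5 0 - thetaSum 1 q 1 0 * thetaSum 1 q 5 (1 / 2) =
      2 * (etaNome q * etaNome (q ^ 5)) := by
  have h5 := thetaSum_one_sixth (pow_pos hq0 5) (pow_lt_one₀ hq0.le hq1 (by norm_num))
  rw [thetaSum_pow hq0, show ((5 : ℕ) : ℝ) * (3 / 2) = 15 / 2 by norm_num] at h5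
  rw [thetaSum_mul_sub hq0 hq1, thetaSum_one_sixth hq0 hq1, h5]

theorem etaNome_relation_psi {q : ℝ} (hq0 : 0 < q) (hq1 : q < 1) :
    etaNome q ^ 2 * etaNome (q ^ 4) ^ 4 * etaNome (q ^ 10) ^ 6 =
      etaNome (q ^ 2) ^ 6 * etaNome (q ^ 5) ^ 2 * etaNome (q ^ 20) ^ 4 +
        etaNome q ^ 3 * etaNome (q ^ 5) ^ 3 * etaNome (q ^ 2) * etaNome (q ^ 10) *
          etaNome (q ^ 4) ^ 2 * etaNome (q ^ 20) ^ 2 := by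
  have hq5 := pow_pos hq0 5
  have hq5' : q ^ 5 < 1 := pow_lt_one₀ hq0.le hq1 (by norm_num)
  have h := thetaSum_mul_sub_eq_etaNome hq0 hq1
  have hu := thetaSum_one_one_half hq0 hq1
  have hv := thetaSum_one_one_half hq5 hq5'
  have hp := thetaSum_one_zero hq0 hq1
  have hp5 := thetaSum_one_zero hq5 hq5'
  rw [thetaSum_pow hq0, ← pow_mul, ← pow_mul] at hv hp5
  norm_num at h hu hv hp hp5 ⊢
  generalize thetaSum 1 q 1 (1 / 2) = U at *
  generalize thetaSum 1 q 5 (1 / 2) = V at *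
  generalize thetaSum 1 q 1 0 = F at *
  generalize thetaSum 1 q 5 0 = F5 at *
  generalize etaNome q = e1 at *
  generalize etaNome (q ^ 2) = e2 at *
  generalize etaNome (q ^ 4) = e4 at *
  generalize etaNome (q ^ 5) = g1 at *
  generalize etaNome (q ^ 10) = g2 at *
  generalize etaNome (q ^ 20) = g4 at *
  linear_combination (e1 ^ 2 * e2 * e4 ^ 2 * g1 ^ 2 * g2 * g4 ^ 2 / 2) * h
    - (e1 ^ 2 * e4 ^ 2 * g2 / 2) * (F5 * (g1 ^ 2 * g4 ^ 2) * hu + 2 * e4 ^ 2 * hp5)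
    + (e2 * g1 ^ 2 * g4 ^ 2 / 2) * (F * (e1 ^ 2 * e4 ^ 2) * hv + 2 * g4 ^ 2 * hp)

theorem etaNome_relation_phi {q : ℝ} (hq0 : 0 < q) (hq1 : q < 1) :
    etaNome (q ^ 2) ^ 6 * etaNome (q ^ 5) ^ 4 * etaNome (q ^ 20) ^ 2 -
      etaNome q ^ 4 * etaNome (q ^ 10) ^ 6 * etaNome (q ^ 4) ^ 2 =
        4 * (etaNome (q ^ 4) ^ 3 * etaNome (q ^ 20) ^ 3 * etaNome q ^ 2 * etaNome (q ^ 2) *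
          etaNome (q ^ 5) ^ 2 * etaNome (q ^ 10)) := by
  have hq5 := pow_pos hq0 5
  have hq5' : q ^ 5 < 1 := pow_lt_one₀ hq0.le hq1 (by norm_num)
  have h := thetaSum_mul_sub_eq_etaNome (pow_pos hq0 4) (pow_lt_one₀ hq0.le hq1 (by norm_num))
  simp only [thetaSum_pow hq0] at h
  rw [← pow_mul] at h
  have hp := thetaSum_one_zero hq0 hq1
  have hp5 := thetaSum_one_zero hq5 hq5'
  have hn := thetaSum_neg_one_zero hq0 hq1
  have hn5 := thetaSum_neg_one_zero hq5 hq5'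
  rw [thetaSum_pow hq0, ← pow_mul, ← pow_mul] at hp5
  rw [thetaSum_pow hq0, ← pow_mul] at hn5
  rw [thetaSum_zero_eq hq0 hq1 (by norm_num) (by norm_num)] at hp hp5 hn hn5
  norm_num at h hp hp5 hn hn5 ⊢
  generalize thetaSum 1 q 4 (1 / 2) = b at *
  generalize thetaSum 1 q 20 (1 / 2) = b5 at *
  generalize thetaSum 1 q 4 0 = a at *
  generalize thetaSum 1 q 20 0 = a5 at *
  generalize etaNome q = e1 at *
  generalize etaNome (q ^ 2) = e2 at *
  generalize etaNome (q ^ 4) = e4 at *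
  generalize etaNome (q ^ 5) = g1 at *
  generalize etaNome (q ^ 10) = g2 at *
  generalize etaNome (q ^ 20) = g4 at *
  linear_combination (2 * e1 ^ 2 * e2 * e4 ^ 2 * g1 ^ 2 * g2 * g4 ^ 2) * h
    - (e2 * g1 ^ 2 * g4 ^ 2) * ((a + b) * (e1 ^ 2 * e4 ^ 2) * hn5 + g1 ^ 2 * hp)
    + (e1 ^ 2 * e4 ^ 2 * g2) * ((a5 + b5) * (g1 ^ 2 * g4 ^ 2) * hn + e1 ^ 2 * hp5)

theorem modular_equation_of_resolvent {b Y x : ℝ} (hb : b ≠ 0) (hY : Y ≠ 0)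
    (ht : b ^ 2 + 1 = (x ^ 2 + 2) * b) (hE : b ^ 3 * Y ^ 2 - 1 = x * (1 - b) * (b * Y)) :
    (Y + 1 / Y) ^ 2 = x ^ 3 * (x ^ 2 + 3) * (Y + 1 / Y) + (x ^ 6 + 7 * x ^ 4 + 9 * x ^ 2 + 4) := by
  have hy : (Y + 1 / Y) * Y = Y ^ 2 + 1 := by field_simp
  have hmul : b ^ 3 * ((Y ^ 2 + 1) ^ 2 - x ^ 3 * (x ^ 2 + 3) * (Y ^ 2 + 1) * Y
      - (x ^ 6 + 7 * x ^ 4 + 9 * x ^ 2 + 4) * Y ^ 2) = 0 := by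
    grind
  have := (mul_eq_zero.mp hmul).resolve_left (pow_ne_zero 3 hb)
  apply mul_right_cancel₀ (pow_ne_zero 2 hY)
  linear_combination this + ((Y + 1 / Y) * Y + Y ^ 2 + 1 - x ^ 3 * (x ^ 2 + 3) * Y) * hy

/-- The two relations between `C₁²`, `C₄²` and `B = C₂²` imply the modular equation. -/
theorem modular_equation_of_relations {c d B : ℝ} (hc : c ≠ 0) (hd : d ≠ 0) (hB : B ≠ 0)
    (hmul : (c ^ 2 - B / c ^ 2) * (d ^ 2 - B / d ^ 2) = 4 * B)
    (hadd : (c ^ 2 - B / c ^ 2) + (d ^ 2 - B / d ^ 2) = B ^ 2 - 1 / B) :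
    ((c * d) ^ 3 + 1 / (c * d) ^ 3) ^ 2 =
      (c / d + 1 / (c / d)) ^ 3 * ((c / d + 1 / (c / d)) ^ 2 + 3) *
        ((c * d) ^ 3 + 1 / (c * d) ^ 3) +
      ((c / d + 1 / (c / d)) ^ 6 + 7 * (c / d + 1 / (c / d)) ^ 4 +
        9 * (c / d + 1 / (c / d)) ^ 2 + 4) := by
  apply modular_equation_of_resolvent (b := B / (c * d) ^ 2)
  · positivity
  · positivity
  · field_simp at hmul ⊢
    linear_combination hmul
  · field_simp at hadd ⊢
    linear_combination -hadd

theorem etaNome_quotient_modular_equation {q c d : ℝ} (hq0 : 0 < q) (hq1 : q < 1)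
    (hc : c = etaNome q * etaNome (q ^ 10) / (etaNome (q ^ 2) * etaNome (q ^ 5)))
    (hd : d = etaNome (q ^ 4) * etaNome (q ^ 40) / (etaNome (q ^ 8) * etaNome (q ^ 20))) :
    c ≠ 0 ∧ d ≠ 0 ∧ ((c * d) ^ 3 + 1 / (c * d) ^ 3) ^ 2 =
      (c / d + 1 / (c / d)) ^ 3 * ((c / d + 1 / (c / d)) ^ 2 + 3) *
        ((c * d) ^ 3 + 1 / (c * d) ^ 3) +
      ((c / d + 1 / (c / d)) ^ 6 + 7 * (c / d + 1 / (c / d)) ^ 4 +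
        9 * (c / d + 1 / (c / d)) ^ 2 + 4) := by
  have hq2 := pow_pos hq0 2
  have hq2' : q ^ 2 < 1 := pow_lt_one₀ hq0.le hq1 two_ne_zero
  have hpos (k : ℕ) (hk : k ≠ 0) : 0 < etaNome (q ^ k) :=
    etaNome_pos (pow_pos hq0 k) (pow_lt_one₀ hq0.le hq1 hk)
  have h1 := etaNome_pos hq0 hq1
  have h2 := hpos 2 (by norm_num)
  have h4 := hpos 4 (by norm_num)
  have h8 := hpos 8 (by norm_num)
  have h5 := hpos 5 (by norm_num)
  have h10 := hpos 10 (by norm_num)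
  have h20 := hpos 20 (by norm_num)
  have h40 := hpos 40 (by norm_num)
  have hphi := etaNome_relation_phi hq0 hq1
  have hpsi := etaNome_relation_psi hq2 hq2'
  have hhalf := etaNome_relation_half hq2 hq2'
  have hzero := etaNome_relation_zero hq2 hq2'
  simp only [← pow_mul] at hpsi hhalf hzero
  norm_num at hpsi hhalf hzero
  generalize etaNome q = e1 at *
  generalize etaNome (q ^ 2) = e2 at *
  generalize etaNome (q ^ 4) = e4 at *
  generalize etaNome (q ^ 8) = e8 at *
  generalize etaNome (q ^ 5) = g1 at *
  generalize etaNome (q ^ 10) = g2 at *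
  generalize etaNome (q ^ 20) = g4 at *
  generalize etaNome (q ^ 40) = g8 at *
  have hc0 : c ≠ 0 := by rw [hc]; positivity
  have hd0 : d ≠ 0 := by rw [hd]; positivity
  obtain ⟨B, hB⟩ : ∃ B, B = (e2 * g4 / (e4 * g2)) ^ 2 := ⟨_, rfl⟩
  have hB0 : B ≠ 0 := by rw [hB]; positivity
  have hwc : c ^ 2 - B / c ^ 2 = -4 * (e4 * g4 ^ 3 / (e2 * g2 ^ 3)) := by
    rw [hc, hB]
    field_simp
    linear_combination -hphi
  have hwd : d ^ 2 - B / d ^ 2 = -(e2 ^ 3 * g2 / (e4 ^ 3 * g4)) := by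
    rw [hd, hB]
    field_simp
    linear_combination -hpsi
  have hwc' : -4 * (e4 * g4 ^ 3 / (e2 * g2 ^ 3)) = (e2 / g2) ^ 2 - 1 / B := by
    rw [hB]
    field_simp
    linear_combination -hzero
  have hwd' : -(e2 ^ 3 * g2 / (e4 ^ 3 * g4)) = B ^ 2 - (e2 / g2) ^ 2 := by
    rw [hB]
    field_simp
    linear_combination hhalf
  refine ⟨hc0, hd0, modular_equation_of_relations hc0 hd0 hB0 ?_ ?_⟩
  · rw [hwc, hwd, hB]
    field_simp
  · rw [hwc, hwd, hwc', hwd']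
    ring

theorem stmt_9 (q C₁ C₄ P Q : ℝ) (hq0 : 0 < q) (hq1 : q < 1)
    (hC1 : C₁ = q ^ ((1 : ℝ) / 6) * fneg q * fneg (q ^ 10) /
      (fneg (q ^ 2) * fneg (q ^ 5)))
    (hC4 : C₄ = q ^ ((2 : ℝ) / 3) * fneg (q ^ 4) * fneg (q ^ 40) /
      (fneg (q ^ 8) * fneg (q ^ 20)))
    (hP : P = C₁ * C₄) (hQ : Q = C₁ / C₄) :
    (P ^ 3 + 1 / P ^ 3) * (19 * (Q + 1 / Q) + 8 * (Q ^ 3 + 1 / Q ^ 3)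
        + (Q ^ 5 + 1 / Q ^ 5))
      + (Q ^ 6 + 1 / Q ^ 6) + 13 * (Q ^ 4 + 1 / Q ^ 4)
      + 52 * (Q ^ 2 + 1 / Q ^ 2) + 82 = P ^ 6 + 1 / P ^ 6 := by
  have hfneg (k : ℕ) (hk : k ≠ 0) : fneg (q ^ k) = qPoch (q ^ k) (q ^ k) :=
    fneg_eq_qPoch (pow_pos hq0 k) (pow_lt_one₀ hq0.le hq1 hk)
  have ht : q ^ (1 / 24 : ℝ) ≠ 0 := (Real.rpow_pos_of_pos hq0 _).ne'
  have hC1' : C₁ = etaNome q * etaNome (q ^ 10) / (etaNome (q ^ 2) * etaNome (q ^ 5)) := by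
    rw [hC1, fneg_eq_qPoch hq0 hq1, hfneg 10 (by norm_num), hfneg 2 (by norm_num),
      hfneg 5 (by norm_num), etaNome_pow hq0, etaNome_pow hq0, etaNome_pow hq0, etaNome,
      show (1 : ℝ) / 6 = ((4 : ℕ) : ℝ) / 24 by norm_num, rpow_div_24 hq0]
    field_simp
  have hC4' : C₄ = etaNome (q ^ 4) * etaNome (q ^ 40) / (etaNome (q ^ 8) * etaNome (q ^ 20)) := by
    rw [hC4, hfneg 4 (by norm_num), hfneg 40 (by norm_num), hfneg 8 (by norm_num),
      hfneg 20 (by norm_num), etaNome_pow hq0, etaNome_pow hq0, etaNome_pow hq0, etaNome_pow hq0,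
      show (2 : ℝ) / 3 = ((16 : ℕ) : ℝ) / 24 by norm_num, rpow_div_24 hq0]
    field_simp
  obtain ⟨hc, hd, h⟩ := etaNome_quotient_modular_equation hq0 hq1 hC1' hC4'
  rw [← hP, ← hQ] at h
  have hP0 : P ≠ 0 := hP ▸ mul_ne_zero hc hd
  have hQ0 : Q ≠ 0 := hQ ▸ div_ne_zero hc hd
  have hP6 : P ^ 6 + 1 / P ^ 6 = (P ^ 3 + 1 / P ^ 3) ^ 2 - 2 := by
    field_simp
    ring
  have hodd : 19 * (Q + 1 / Q) + 8 * (Q ^ 3 + 1 / Q ^ 3) + (Q ^ 5 + 1 / Q ^ 5) =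
      (Q + 1 / Q) ^ 3 * ((Q + 1 / Q) ^ 2 + 3) := by
    field_simp
    ring
  have heven : (Q ^ 6 + 1 / Q ^ 6) + 13 * (Q ^ 4 + 1 / Q ^ 4) + 52 * (Q ^ 2 + 1 / Q ^ 2) + 82 =
      (Q + 1 / Q) ^ 6 + 7 * (Q + 1 / Q) ^ 4 + 9 * (Q + 1 / Q) ^ 2 + 2 := by
    field_simp
    ring
  rw [hP6, hodd, h]
  linear_combination heven
end

section
/- Let s > 0 and set X := √(b_{s,5}·b_{4s,5}) and Y := √(b_{s,5}/b_{4s,5}). Then (Y^4 + 1/Y^4) - 3(Y^2 + 1/Y^2) - 5(X + 1/X)(Y + 1/Y) - 12 = 0. -/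
open Real

/-- The remarkable product of theta-functions `b_{s,t}`. -/
noncomputable def b (s t : ℝ) : ℝ :=
  t * Real.exp (-((t - 1) * (π / 4) * Real.sqrt (s / t))) *
      psi (-Real.exp (-(π * Real.sqrt (s * t)))) ^ 2 *
      phi (-Real.exp (-(2 * π * Real.sqrt (s * t)))) ^ 2 /
    (psi (-Real.exp (-(π * Real.sqrt (s / t)))) ^ 2 *
      phi (-Real.exp (-(2 * π * Real.sqrt (s / t)))) ^ 2)

open Filter Topology Finset

/-- The infinite product `∏_{k ≥ 0} (1 + a q^k)`. -/
noncomputable def qProd (a q : ℂ) : ℂ := ∏' k : ℕ, (1 + a * q ^ k)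

/-- The two-variable theta series `∑_{n ∈ ℤ} q^(n^2) z^n`. -/
noncomputable def thetaSeries (z q : ℂ) : ℂ := ∑' n : ℤ, q ^ (n ^ 2) * z ^ n

section Products

variable {q : ℂ}

theorem qProd_multipliable (a : ℂ) (hq : ‖q‖ < 1) :
    Multipliable fun k : ℕ => 1 + a * q ^ k := by
  apply multipliable_one_add_of_summable
  simp only [norm_mul, norm_pow]
  exact (summable_geometric_of_lt_one (norm_nonneg _) hq).mul_left _

theorem qProd_tendsto (a : ℂ) (hq : ‖q‖ < 1) :
    Tendsto (fun n => ∏ k ∈ range n, (1 + a * q ^ k)) atTop (𝓝 (qProd a q)) :=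
  (qProd_multipliable a hq).hasProd.tendsto_prod_nat

theorem one_add_mul_pow_ne_zero {a : ℂ} (hq : ‖q‖ < 1) (ha : ‖a‖ < 1) (k : ℕ) :
    1 + a * q ^ k ≠ 0 := by
  intro h
  have h1 : ‖a * q ^ k‖ = 1 := by
    rw [show a * q ^ k = -1 by linear_combination h]; simp
  rw [norm_mul, norm_pow] at h1
  have h2 : ‖q‖ ^ k ≤ 1 := pow_le_one₀ (norm_nonneg _) hq.le
  nlinarith [norm_nonneg a, pow_nonneg (norm_nonneg q) k]

theorem qProd_ne_zero {a : ℂ} (hq : ‖q‖ < 1) (ha : ‖a‖ < 1) : qProd a q ≠ 0 := by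
  refine tprod_one_add_ne_zero_of_summable (f := fun k : ℕ => a * q ^ k)
    (one_add_mul_pow_ne_zero hq ha) ?_
  simp only [norm_mul, norm_pow]
  exact (summable_geometric_of_lt_one (norm_nonneg _) hq).mul_left _

theorem qProd_step (a : ℂ) (hq : ‖q‖ < 1) : qProd a q = (1 + a) * qProd (a * q) q := by
  refine tendsto_nhds_unique ((tendsto_add_atTop_iff_nat 1).2 (qProd_tendsto a hq)) ?_
  convert (qProd_tendsto (a * q) hq).const_mul (1 + a) using 2 with n
  rw [prod_range_succ', mul_comm]
  simp [pow_succ', mul_assoc]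

theorem qProd_split (a : ℂ) (hq : ‖q‖ < 1) (m : ℕ) (hm : 0 < m) :
    qProd a q = ∏ i ∈ range m, qProd (a * q ^ i) (q ^ m) := by
  have hqm : ‖q ^ m‖ < 1 := by
    rw [norm_pow]; exact pow_lt_one₀ (norm_nonneg _) hq hm.ne'
  have h := tendsto_finsetProd (range m) fun i _ => qProd_tendsto (a * q ^ i) hqm
  refine tendsto_nhds_unique
    ((qProd_tendsto a hq).comp (tendsto_id.const_mul_atTop' hm)) (h.congr fun N => ?_)
  simp only [Function.comp_apply, id]
  induction N with
  | zero => simp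
  | succ N ih =>
    rw [Nat.mul_succ, prod_range_add, ← ih, ← prod_mul_distrib]
    refine prod_congr rfl fun i _ => ?_
    rw [prod_range_succ]
    ring

theorem qProd_mul_neg (a : ℂ) (hq : ‖q‖ < 1) :
    qProd a q * qProd (-a) q = qProd (-a ^ 2) (q ^ 2) := by
  rw [qProd, qProd, ← (qProd_multipliable a hq).tprod_mul (qProd_multipliable (-a) hq), qProd]
  refine tprod_congr fun k => ?_
  ring

theorem qProd_mul_fifth_roots {ζ : ℂ} (hζ : ζ ^ 4 + ζ ^ 3 + ζ ^ 2 + ζ + 1 = 0) (a : ℂ)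
    (hq : ‖q‖ < 1) :
    qProd a q * qProd (ζ * a) q * qProd (ζ ^ 2 * a) q * qProd (ζ ^ 3 * a) q * qProd (ζ ^ 4 * a) q
      = qProd (a ^ 5) (q ^ 5) := by
  have M := fun a => qProd_multipliable a hq
  simp only [qProd]
  rw [← (M _).tprod_mul (M _), ← ((M _).mul (M _)).tprod_mul (M _),
    ← (((M _).mul (M _)).mul (M _)).tprod_mul (M _),
    ← ((((M _).mul (M _)).mul (M _)).mul (M _)).tprod_mul (M _)]
  refine tprod_congr fun k => ?_
  rw [← pow_mul, mul_comm 5 k, pow_mul]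
  generalize q ^ k = x
  have key : ∀ y : ℂ, (1 + y) * (1 + ζ * y) * (1 + ζ ^ 2 * y) * (1 + ζ ^ 3 * y) * (1 + ζ ^ 4 * y)
      = 1 + y ^ 5 := by
    intro y
    linear_combination (y + y ^ 2 * (ζ + ζ ^ 3) + y ^ 3 * (ζ ^ 5 + ζ ^ 3) + y ^ 4 * ζ ^ 6 +
      y ^ 5 * (ζ - 1) * (ζ ^ 5 + 1)) * hζ
  have := key (a * x)
  simp only [mul_assoc] at this ⊢
  rw [this]; ring

/-- Euler's identity between odd parts and distinct parts. -/
theorem euler_odd_distinct (hq : ‖q‖ < 1) : qProd (-q) (q ^ 2) * qProd q q = 1 := by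
  have hq2 : ‖q ^ 2‖ < 1 := by
    rw [norm_pow]; exact pow_lt_one₀ (norm_nonneg _) hq two_ne_zero
  have h1 := qProd_mul_neg q hq
  have h2 := qProd_split (-q) hq 2 two_pos
  simp only [prod_range_succ, prod_range_zero, one_mul, pow_zero, pow_one, mul_one] at h2
  have h3 : qProd (-q ^ 2) (q ^ 2) ≠ 0 := qProd_ne_zero hq2 (by simpa using hq2)
  rw [show -q * q = -q ^ 2 by ring] at h2
  rw [h2] at h1
  apply mul_right_cancel₀ h3
  linear_combination h1

end Products

section TripleProduct

variable {q z : ℂ}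

theorem summable_norm_theta (hq0 : q ≠ 0) (hq : ‖q‖ < 1) (hz : z ≠ 0) :
    Summable fun n : ℤ => ‖q ^ (n ^ 2) * z ^ n‖ := by
  have key : ∀ z : ℂ, z ≠ 0 → Summable fun n : ℕ => ‖q ^ (n ^ 2) * z ^ n‖ := by
    intro z hz
    refine (summable_of_ratio_test_tendsto_lt_one (l := 0) zero_lt_one
      (Eventually.of_forall fun n => by simp [hq0, hz]) ?_)
    have h : Tendsto (fun n : ℕ => ‖q‖ * ‖z‖ * (‖q‖ ^ 2) ^ n) atTop (𝓝 0) := by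
      have := (tendsto_pow_atTop_nhds_zero_of_lt_one (sq_nonneg ‖q‖)
        (pow_lt_one₀ (norm_nonneg q) hq two_ne_zero)).const_mul (‖q‖ * ‖z‖)
      simpa using this
    refine h.congr fun n => ?_
    have : ‖q‖ ≠ 0 := norm_ne_zero_iff.2 hq0
    have : ‖z‖ ≠ 0 := norm_ne_zero_iff.2 hz
    simp only [norm_norm, norm_mul, norm_pow]
    field_simp
    ring
  refine Summable.of_nat_of_neg ?_ ?_
  · exact_mod_cast key z hz
  · refine (key z⁻¹ (inv_ne_zero hz)).congr fun n => ?_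
    rw [neg_sq, zpow_neg, inv_pow, zpow_natCast]
    norm_cast

/-- The finite product `∏_{k=1}^n (1 - Q^k)`. -/
noncomputable def qFact (Q : ℂ) (n : ℕ) : ℂ := ∏ k ∈ range n, (1 + -Q * Q ^ k)

theorem qFact_ne_zero {Q : ℂ} (hQ : ‖Q‖ < 1) (n : ℕ) : qFact Q n ≠ 0 :=
  prod_ne_zero_iff.2 fun k _ => one_add_mul_pow_ne_zero hQ (by simpa using hQ) k

theorem qFact_succ (Q : ℂ) (n : ℕ) : qFact Q (n + 1) = qFact Q n * (1 - Q ^ (n + 1)) := by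
  rw [qFact, prod_range_succ, qFact]; ring

/-- The Gaussian binomial coefficient `(i + j)! / (i! j!)`. -/
noncomputable def qBinom (Q : ℂ) (i j : ℕ) : ℂ := qFact Q (i + j) / (qFact Q i * qFact Q j)

theorem qBinom_zero_left {Q : ℂ} (hQ : ‖Q‖ < 1) (j : ℕ) : qBinom Q 0 j = 1 := by
  have := qFact_ne_zero hQ j
  simp [qBinom, show qFact Q 0 = 1 by simp [qFact], this]

theorem qBinom_zero_right {Q : ℂ} (hQ : ‖Q‖ < 1) (i : ℕ) : qBinom Q i 0 = 1 := by
  have := qFact_ne_zero hQ i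
  simp [qBinom, show qFact Q 0 = 1 by simp [qFact], this]

theorem qBinom_succ_succ {Q : ℂ} (hQ : ‖Q‖ < 1) (i j : ℕ) :
    qBinom Q (i + 1) (j + 1) = qBinom Q i (j + 1) + Q ^ (i + 1) * qBinom Q (i + 1) j := by
  have hi := qFact_ne_zero hQ i
  have hj := qFact_ne_zero hQ j
  have hi' := qFact_ne_zero hQ (i + 1)
  have hj' := qFact_ne_zero hQ (j + 1)
  unfold qBinom
  rw [show i + 1 + (j + 1) = i + j + 1 + 1 by ring, show i + (j + 1) = i + j + 1 by ring,
    show i + 1 + j = i + j + 1 by ring, qFact_succ Q (i + j + 1)]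
  rw [qFact_succ] at hi' hj' 
  rw [qFact_succ Q i, qFact_succ Q j]
  have h1 := right_ne_zero_of_mul hi'
  have h2 := right_ne_zero_of_mul hj'
  field_simp
  ring

/-- The finite `q`-binomial theorem. -/
theorem qBinomial_theorem (hq : ‖q‖ < 1) (z : ℂ) (m : ℕ) :
    ∏ k ∈ range m, (1 + z * q ^ (2 * k + 1)) =
      ∑ p ∈ antidiagonal m, qBinom (q ^ 2) p.1 p.2 * q ^ (p.2 ^ 2) * z ^ p.2 := by
  have hQ : ‖q ^ 2‖ < 1 := by
    rw [norm_pow]; exact pow_lt_one₀ (norm_nonneg _) hq two_ne_zero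
  induction m with
  | zero => simp [qBinom, qFact]
  | succ m ih =>
    rw [prod_range_succ, ih]
    cases m with
    | zero =>
      simp [qBinom_zero_left hQ, qBinom_zero_right hQ, Nat.sum_antidiagonal_succ]
      ring
    | succ m =>
      rw [mul_add, mul_one]
      nth_rewrite 1 [Nat.sum_antidiagonal_succ']
      rw [Nat.sum_antidiagonal_succ (n := m)]
      rw [Nat.sum_antidiagonal_succ (n := m + 1), Nat.sum_antidiagonal_succ' (n := m)]
      simp only [qBinom_succ_succ hQ, qBinom_zero_left hQ, qBinom_zero_right hQ, add_mul,
        sum_add_distrib, sum_mul]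
      have : ∑ p ∈ antidiagonal m, qBinom (q ^ 2) (p.1 + 1) p.2 * q ^ (p.2 ^ 2) * z ^ p.2 *
            (z * q ^ (2 * (m + 1) + 1)) =
          ∑ p ∈ antidiagonal m, (q ^ 2) ^ (p.1 + 1) * qBinom (q ^ 2) (p.1 + 1) p.2 *
            q ^ ((p.2 + 1) ^ 2) * z ^ (p.2 + 1) := by
        refine sum_congr rfl fun p hp => ?_
        rw [← mem_antidiagonal.1 hp]
        ring
      rw [this]
      ring

/-- A finite form of the Jacobi triple product. -/
theorem finite_triple_product (hq0 : q ≠ 0) (hq : ‖q‖ < 1) (hz : z ≠ 0) (m n : ℕ) :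
    (∏ k ∈ range m, (1 + z * q ^ (2 * k + 1))) * ∏ k ∈ range n, (1 + z⁻¹ * q ^ (2 * k + 1)) =
      ∑ p ∈ antidiagonal (m + n), qBinom (q ^ 2) p.1 p.2 *
        (q ^ (((p.2 : ℤ) - n) ^ 2) * z ^ ((p.2 : ℤ) - n)) := by
  induction n generalizing m z with
  | zero =>
    simp only [range_zero, prod_empty, mul_one, qBinomial_theorem hq, Nat.add_zero, Nat.cast_zero,
      sub_zero, zpow_natCast, mul_assoc]
    norm_cast
  | succ n ih =>
    have h := ih (z := z * (q ^ 2)⁻¹) (by positivity) (m + 1)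
    rw [prod_range_succ'] at h
    have e1 : ∀ k : ℕ, 1 + z * (q ^ 2)⁻¹ * q ^ (2 * (k + 1) + 1) = 1 + z * q ^ (2 * k + 1) := by
      intro k; field_simp; ring
    have e2 : ∀ k : ℕ, 1 + (z * (q ^ 2)⁻¹)⁻¹ * q ^ (2 * k + 1)
        = 1 + z⁻¹ * q ^ (2 * (k + 1) + 1) := by
      intro k; field_simp; ring
    simp only [e1, e2] at h
    rw [prod_range_succ' _ n]
    have hzq : z * q⁻¹ ≠ 0 := mul_ne_zero hz (inv_ne_zero hq0)
    apply mul_left_cancel₀ hzq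
    have e3 : z * q⁻¹ * (1 + z⁻¹ * q ^ (2 * 0 + 1)) = 1 + z * (q ^ 2)⁻¹ * q ^ (2 * 0 + 1) := by
      field_simp; ring
    calc _ = _ := by linear_combination (∏ k ∈ range m, (1 + z * q ^ (2 * k + 1))) *
            (∏ k ∈ range n, (1 + z⁻¹ * q ^ (2 * (k + 1) + 1))) * e3
      _ = _ := h
      _ = _ := by
        rw [mul_sum, show m + 1 + n = m + (n + 1) by ring]
        refine sum_congr rfl fun p _ => ?_
        have hA : q ^ (((p.2 : ℤ) - n) ^ 2) * (q ^ 2)⁻¹ ^ ((p.2 : ℤ) - n)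
            = q⁻¹ * q ^ (((p.2 : ℤ) - (n + 1)) ^ 2) := by
          rw [inv_zpow, ← zpow_natCast q 2, ← zpow_mul, ← zpow_neg, ← zpow_add₀ hq0,
            ← zpow_neg_one, ← zpow_add₀ hq0]
          congr 1; push_cast; ring
        have hB : z ^ ((p.2 : ℤ) - n) = z * z ^ ((p.2 : ℤ) - (n + 1)) := by
          rw [← zpow_one_add₀ hz]; congr 1; ring
        push_cast
        rw [mul_zpow]
        linear_combination qBinom (q ^ 2) p.1 p.2 * z ^ ((p.2 : ℤ) - n) * hA +
          qBinom (q ^ 2) p.1 p.2 * q⁻¹ * q ^ (((p.2 : ℤ) - (n + 1)) ^ 2) * hB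

theorem qFact_tendsto {Q : ℂ} (hQ : ‖Q‖ < 1) :
    Tendsto (qFact Q) atTop (𝓝 (qProd (-Q) Q)) := qProd_tendsto _ hQ

theorem qBinom_bounded {Q : ℂ} (hQ : ‖Q‖ < 1) : ∃ C : ℝ, ∀ i j, ‖qBinom Q i j‖ ≤ C := by
  have h0 : qProd (-Q) Q ≠ 0 := qProd_ne_zero hQ (by simpa using hQ)
  obtain ⟨C, hC⟩ := (qFact_tendsto hQ).norm.bddAbove_range
  obtain ⟨D, hD⟩ := ((qFact_tendsto hQ).inv₀ h0).norm.bddAbove_range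
  have hC' : ∀ n, ‖qFact Q n‖ ≤ C := fun n => hC ⟨n, rfl⟩
  have hD' : ∀ n, ‖(qFact Q n)⁻¹‖ ≤ D := fun n => hD ⟨n, rfl⟩
  refine ⟨C * (D * D), fun i j => ?_⟩
  have hC0 : 0 ≤ C := (norm_nonneg _).trans (hC' 0)
  have hD0 : 0 ≤ D := (norm_nonneg _).trans (hD' 0)
  rw [qBinom, div_eq_mul_inv, mul_inv, norm_mul, norm_mul]
  gcongr <;> first | exact hC' _ | exact hD' _

/-- The Jacobi triple product identity. -/
theorem jacobi_triple_product (hq0 : q ≠ 0) (hq : ‖q‖ < 1) (hz : z ≠ 0) :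
    thetaSeries z q =
      qProd (-q ^ 2) (q ^ 2) * qProd (z * q) (q ^ 2) * qProd (z⁻¹ * q) (q ^ 2) := by
  have hQ : ‖q ^ 2‖ < 1 := by
    rw [norm_pow]; exact pow_lt_one₀ (norm_nonneg _) hq two_ne_zero
  have h0 : qProd (-q ^ 2) (q ^ 2) ≠ 0 := qProd_ne_zero hQ (by simpa using hQ)
  obtain ⟨C, hC⟩ := qBinom_bounded hQ
  let F : ℕ → ℤ → ℂ := fun n k =>
    if k ∈ Finset.Icc (-(n : ℤ)) n then
      qBinom (q ^ 2) (n - k).toNat (n + k).toNat * (q ^ (k ^ 2) * z ^ k) else 0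
  have hF : ∀ n : ℕ, ∑' k, F n k = (∏ k ∈ range n, (1 + z * q * (q ^ 2) ^ k)) *
      ∏ k ∈ range n, (1 + z⁻¹ * q * (q ^ 2) ^ k) := by
    intro n
    have := finite_triple_product hq0 hq hz n n
    have e : ∀ (a : ℂ) (k : ℕ), 1 + a * q * (q ^ 2) ^ k = 1 + a * q ^ (2 * k + 1) := by
      intro a k; ring
    simp only [e]
    rw [this, tsum_eq_sum (s := Finset.Icc (-(n : ℤ)) n) (fun k hk => if_neg hk),
      Finset.sum_congr rfl fun k hk => if_pos hk]
    symm
    refine Finset.sum_bij (fun p _ => (p.2 : ℤ) - n) ?_ ?_ ?_ ?_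
    · intro p hp
      rw [HasAntidiagonal.mem_antidiagonal] at hp
      rw [Finset.mem_Icc]; omega
    · intro p hp p' hp' h
      rw [HasAntidiagonal.mem_antidiagonal] at hp hp'
      ext <;> omega
    · intro k hk
      rw [Finset.mem_Icc] at hk
      refine ⟨((n - k).toNat, (n + k).toNat), ?_, ?_⟩
      · rw [HasAntidiagonal.mem_antidiagonal]; dsimp only; omega
      · dsimp only; omega
    · intro p hp
      rw [HasAntidiagonal.mem_antidiagonal] at hp
      rw [show ((n : ℤ) - (p.2 - n)).toNat = p.1 by omega,
        show ((n : ℤ) + (p.2 - n)).toNat = p.2 by omega]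
  have hlim : Tendsto (fun n => ∑' k, F n k) atTop
      (𝓝 (∑' k : ℤ, (qProd (-q ^ 2) (q ^ 2))⁻¹ * (q ^ (k ^ 2) * z ^ k))) := by
    refine tendsto_tsum_of_dominated_convergence
      ((summable_norm_theta hq0 hq hz).mul_left C) (fun k => ?_) (Eventually.of_forall ?_)
    · have hi : Tendsto (fun n : ℕ => ((n : ℤ) - k).toNat) atTop atTop :=
        tendsto_atTop.2 fun b => (eventually_ge_atTop (b + k.natAbs)).mono fun n hn => by omega
      have hj : Tendsto (fun n : ℕ => ((n : ℤ) + k).toNat) atTop atTop :=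
        tendsto_atTop.2 fun b => (eventually_ge_atTop (b + k.natAbs)).mono fun n hn => by omega
      have hij : Tendsto (fun n : ℕ => ((n : ℤ) - k).toNat + ((n : ℤ) + k).toNat) atTop atTop :=
        tendsto_atTop_mono (fun n => Nat.le_add_right _ _) hi
      have T := qFact_tendsto hQ
      have h := (((T.comp hij).div ((T.comp hi).mul (T.comp hj)) (mul_ne_zero h0 h0))).mul_const
        (q ^ (k ^ 2) * z ^ k)
      rw [show qProd (-q ^ 2) (q ^ 2) / (qProd (-q ^ 2) (q ^ 2) * qProd (-q ^ 2) (q ^ 2))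
        = (qProd (-q ^ 2) (q ^ 2))⁻¹ by field_simp] at h
      refine h.congr' ((eventually_ge_atTop k.natAbs).mono fun n hn => ?_)
      have : k ∈ Finset.Icc (-(n : ℤ)) n := by rw [Finset.mem_Icc]; omega
      simp only [F, if_pos this]
      rfl
    · intro n k
      simp only [F]
      split_ifs
      · rw [norm_mul]
        gcongr
        exact hC _ _
      · rw [norm_zero]
        exact mul_nonneg ((norm_nonneg _).trans (hC 0 0)) (norm_nonneg _)
  have hprod := (qProd_tendsto (z * q) hQ).mul (qProd_tendsto (z⁻¹ * q) hQ)
  have h := tendsto_nhds_unique (hlim.congr hF) hprod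
  rw [tsum_mul_left] at h
  rw [thetaSeries, mul_assoc, ← h, mul_inv_cancel_left₀ h0]

end TripleProduct

section Lattice

variable {q : ℂ}

theorem thetaSeries_inv (z q : ℂ) : thetaSeries z⁻¹ q = thetaSeries z q := by
  rw [thetaSeries, thetaSeries, ← (Equiv.neg ℤ).tsum_eq]
  refine tsum_congr fun n => ?_
  simp

/-- Representatives of the classes of the Gaussian integers modulo `2 + i`. -/
def cosetRep : Fin 5 → ℤ × ℤ := ![(0, 0), (1, 0), (-1, 0), (0, 1), (0, -1)]

theorem cosetRep_bijective : Function.Bijective fun c : Fin 5 × ℤ × ℤ =>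
    ((cosetRep c.1).1 + (2 * c.2.1 - c.2.2), (cosetRep c.1).2 + (c.2.1 + 2 * c.2.2)) := by
  constructor
  · rintro ⟨c, a, b⟩ ⟨c', a', b'⟩ h
    fin_cases c <;> fin_cases c' <;> simp [cosetRep] at h ⊢ <;> omega
  · rintro ⟨x, y⟩
    have key : ∀ c : Fin 5, (5 : ℤ) ∣ (x - (cosetRep c).1) - 2 * (y - (cosetRep c).2) →
        ∃ p : Fin 5 × ℤ × ℤ, ((cosetRep p.1).1 + (2 * p.2.1 - p.2.2),
          (cosetRep p.1).2 + (p.2.1 + 2 * p.2.2)) = (x, y) := by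
      intro c hc
      refine ⟨(c, (2 * (x - (cosetRep c).1) + (y - (cosetRep c).2)) / 5,
        (2 * (y - (cosetRep c).2) - (x - (cosetRep c).1)) / 5), ?_⟩
      ext <;> dsimp only <;> omega
    have h : (x - 2 * y) % 5 = 0 ∨ (x - 2 * y) % 5 = 1 ∨ (x - 2 * y) % 5 = 4 ∨
        (x - 2 * y) % 5 = 3 ∨ (x - 2 * y) % 5 = 2 := by omega
    rcases h with h | h | h | h | h
    · exact key 0 (by simp [cosetRep]; omega)
    · exact key 1 (by simp [cosetRep]; omega)
    · exact key 2 (by simp [cosetRep]; omega)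
    · exact key 3 (by simp [cosetRep]; omega)
    · exact key 4 (by simp [cosetRep]; omega)

theorem tsum_coset (hq0 : q ≠ 0) (hq : ‖q‖ < 1) {u v : ℂ} (hu : u ≠ 0) (hv : v ≠ 0)
    (h1 : u ^ 2 * v = 1) (h2 : v ^ 2 = u) (e f : ℤ) :
    ∑' p : ℤ × ℤ, q ^ ((e + (2 * p.1 - p.2)) ^ 2) * u ^ (e + (2 * p.1 - p.2)) *
      (q ^ ((f + (p.1 + 2 * p.2)) ^ 2) * v ^ (f + (p.1 + 2 * p.2))) =
    q ^ (e ^ 2 + f ^ 2) * u ^ e * v ^ f * (thetaSeries (q ^ (4 * e + 2 * f)) (q ^ 5) *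
      thetaSeries (q ^ (4 * f - 2 * e)) (q ^ 5)) := by
  have hq5 : ‖q ^ 5‖ < 1 := by
    rw [norm_pow]; exact pow_lt_one₀ (norm_nonneg _) hq (by norm_num)
  have hq50 : q ^ 5 ≠ 0 := pow_ne_zero _ hq0
  rw [thetaSeries, thetaSeries, tsum_mul_tsum_of_summable_norm
    (summable_norm_theta hq50 hq5 (zpow_ne_zero _ hq0))
    (summable_norm_theta hq50 hq5 (zpow_ne_zero _ hq0)), ← tsum_mul_left]
  refine tsum_congr fun ⟨a, b⟩ => ?_
  have hq' : q ^ ((e + (2 * a - b)) ^ 2) * q ^ ((f + (a + 2 * b)) ^ 2) =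
      q ^ (e ^ 2 + f ^ 2) * ((q ^ 5) ^ (a ^ 2) * (q ^ (4 * e + 2 * f)) ^ a *
        ((q ^ 5) ^ (b ^ 2) * (q ^ (4 * f - 2 * e)) ^ b)) := by
    rw [← zpow_natCast q 5]
    simp only [← zpow_mul, ← zpow_add₀ hq0]
    congr 1; push_cast; ring
  have huv : u ^ (e + (2 * a - b)) * v ^ (f + (a + 2 * b)) = u ^ e * v ^ f := by
    have ha : u ^ (2 * a) * v ^ a = 1 := by
      rw [zpow_mul, ← mul_zpow, zpow_ofNat, h1, one_zpow]
    have hb : v ^ (2 * b) = u ^ b := by rw [zpow_mul, zpow_ofNat, h2]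
    rw [zpow_add₀ hu, zpow_add₀ hv, zpow_add₀ hv, zpow_sub₀ hu, hb]
    have := zpow_ne_zero b hu
    field_simp
    linear_combination ha
  dsimp only
  linear_combination u ^ (e + (2 * a - b)) * v ^ (f + (a + 2 * b)) * hq' +
    q ^ (e ^ 2 + f ^ 2) * ((q ^ 5) ^ (a ^ 2) * (q ^ (4 * e + 2 * f)) ^ a *
        ((q ^ 5) ^ (b ^ 2) * (q ^ (4 * f - 2 * e)) ^ b)) * huv

/-- Splitting a sum over the Gaussian integers into classes modulo `2 + i`. -/
theorem thetaSeries_mul_thetaSeries (hq0 : q ≠ 0) (hq : ‖q‖ < 1) {u v : ℂ} (hu : u ≠ 0)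
    (hv : v ≠ 0) (h1 : u ^ 2 * v = 1) (h2 : v ^ 2 = u) :
    thetaSeries u q * thetaSeries v q = thetaSeries 1 (q ^ 5) ^ 2 +
      (u + u⁻¹ + v + v⁻¹) * (q * thetaSeries (q ^ 4) (q ^ 5) * thetaSeries (q ^ 2) (q ^ 5)) := by
  have su := summable_norm_theta hq0 hq hu
  have sv := summable_norm_theta hq0 hq hv
  have s := summable_mul_of_summable_norm su sv
  let E := Equiv.ofBijective _ cosetRep_bijective
  rw [thetaSeries, thetaSeries, tsum_mul_tsum_of_summable_norm su sv, ← E.tsum_eq]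
  refine (Summable.tsum_prod (E.summable_iff.2 s)).trans ?_
  rw [tsum_fintype]
  have hc : ∀ c : Fin 5, _ := fun c =>
    tsum_coset hq0 hq hu hv h1 h2 (cosetRep c).1 (cosetRep c).2
  refine (Finset.sum_congr rfl fun c _ => hc c).trans ?_
  rw [Fin.sum_univ_five]
  simp [cosetRep, zpow_neg, thetaSeries_inv]
  norm_cast
  ring

end Lattice

section ThetaProducts

variable {q : ℂ}

theorem norm_pow_lt_one (hq : ‖q‖ < 1) {n : ℕ} (hn : n ≠ 0) : ‖q ^ n‖ < 1 := by
  rw [norm_pow]; exact pow_lt_one₀ (norm_nonneg _) hq hn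

/-- Ramanujan's `ψ` at a complex argument. -/
noncomputable def psiSeries (q : ℂ) : ℂ := ∑' n : ℕ, q ^ (n * (n + 1) / 2)

theorem thetaSeries_one_eq (hq0 : q ≠ 0) (hq : ‖q‖ < 1) :
    thetaSeries 1 q = qProd (-q ^ 2) (q ^ 2) * qProd q (q ^ 2) ^ 2 := by
  rw [jacobi_triple_product hq0 hq one_ne_zero, inv_one, one_mul]; ring

theorem psiSeries_eq (hq0 : q ≠ 0) (hq : ‖q‖ < 1) :
    psiSeries q = qProd (-q) q * qProd q q ^ 2 := by
  obtain ⟨w, rfl⟩ : ∃ w : ℂ, w ^ 2 = q := IsAlgClosed.exists_pow_nat_eq q two_pos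
  have hw0 : w ≠ 0 := by rintro rfl; simp at hq0
  have hw : ‖w‖ < 1 := by
    rw [norm_pow] at hq
    exact (sq_lt_one_iff₀ (norm_nonneg _)).1 hq
  have h1 := jacobi_triple_product hw0 hw hw0
  rw [inv_mul_cancel₀ hw0, qProd_step 1 hq, one_mul, ← sq] at h1
  have hs := (summable_norm_theta hw0 hw hw0).of_norm
  have e1 : ∀ n : ℕ, w ^ ((n : ℤ) ^ 2) * w ^ (n : ℤ) = (w ^ 2) ^ (n * (n + 1) / 2) := by
    intro n
    rw [← pow_mul, Nat.mul_div_cancel' (Nat.even_mul_succ_self n).two_dvd, mul_add, pow_add,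
      mul_one, ← sq]
    norm_cast
  have e2 : ∀ n : ℕ, w ^ ((-((n : ℤ) + 1)) ^ 2) * w ^ (-((n : ℤ) + 1))
      = (w ^ 2) ^ (n * (n + 1) / 2) := by
    intro n
    rw [← e1, ← zpow_add₀ hw0, ← zpow_add₀ hw0]; congr 1; ring
  have h2 : thetaSeries w w = 2 * psiSeries (w ^ 2) := by
    have s1 : Summable fun n : ℕ => w ^ ((n : ℤ) ^ 2) * w ^ (n : ℤ) :=
      hs.comp_injective (i := fun n : ℕ => (n : ℤ)) Nat.cast_injective
    have s2 : Summable fun n : ℕ => w ^ ((-((n : ℤ) + 1)) ^ 2) * w ^ (-((n : ℤ) + 1)) := by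
      simpa only [e1, e2] using s1
    rw [thetaSeries, tsum_of_nat_of_neg_add_one (f := fun n : ℤ => w ^ (n ^ 2) * w ^ n) s1 s2]
    simp only [e1, e2]
    rw [psiSeries]; ring
  linear_combination (h1 - h2) / 2

theorem qProd_eq_even_odd (a : ℂ) (hq : ‖q‖ < 1) :
    qProd a q = qProd a (q ^ 2) * qProd (a * q) (q ^ 2) := by
  simpa [prod_range_succ] using qProd_split a hq 2 two_pos

theorem thetaSeries_one_mul_neg (hq0 : q ≠ 0) (hq : ‖q‖ < 1) :
    thetaSeries 1 q * thetaSeries 1 (-q) = thetaSeries 1 (-q ^ 2) ^ 2 := by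
  have hq2 := norm_pow_lt_one hq two_ne_zero
  rw [thetaSeries_one_eq hq0 hq, thetaSeries_one_eq (neg_ne_zero.2 hq0) (by simpa using hq),
    thetaSeries_one_eq (neg_ne_zero.2 (pow_ne_zero 2 hq0)) (by simpa using hq2)]
  have h1 := qProd_mul_neg q hq2
  have h2 := qProd_eq_even_odd (-q ^ 2) hq2
  simp only [neg_sq] at *
  rw [show -q ^ 2 * q ^ 2 = -(q ^ 2) ^ 2 by ring] at h2
  calc _ = qProd (-q ^ 2) (q ^ 2) ^ 2 * (qProd q (q ^ 2) * qProd (-q) (q ^ 2)) ^ 2 := by ring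
    _ = _ := by rw [h1, h2]; ring

theorem psiSeries_sq (hq0 : q ≠ 0) (hq : ‖q‖ < 1) :
    psiSeries q ^ 2 = thetaSeries 1 q * psiSeries (q ^ 2) := by
  have hq2 := norm_pow_lt_one hq two_ne_zero
  rw [thetaSeries_one_eq hq0 hq, psiSeries_eq hq0 hq, psiSeries_eq (pow_ne_zero 2 hq0) hq2]
  have h1 := qProd_mul_neg q hq
  have h2 := qProd_eq_even_odd q hq
  rw [← sq] at h2
  rw [← h1]
  linear_combination (qProd (-q) q * qProd q q) ^ 2 *
    (qProd q q + qProd q (q ^ 2) * qProd (q ^ 2) (q ^ 2)) * h2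

theorem thetaSeries_one_ne_zero (hq0 : q ≠ 0) (hq : ‖q‖ < 1) : thetaSeries 1 q ≠ 0 := by
  have hq2 := norm_pow_lt_one hq two_ne_zero
  rw [thetaSeries_one_eq hq0 hq]
  exact mul_ne_zero (qProd_ne_zero hq2 (by simpa using hq2)) (pow_ne_zero _ (qProd_ne_zero hq2 hq))

theorem psiSeries_ne_zero (hq0 : q ≠ 0) (hq : ‖q‖ < 1) : psiSeries q ≠ 0 := by
  rw [psiSeries_eq hq0 hq]
  exact mul_ne_zero (qProd_ne_zero hq (by simpa using hq)) (pow_ne_zero _ (qProd_ne_zero hq hq))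

theorem thetaSeries_four_mul_two (hq0 : q ≠ 0) (hq : ‖q‖ < 1) :
    thetaSeries (q ^ 4) (q ^ 5) * thetaSeries (q ^ 2) (q ^ 5) * qProd (q ^ 5) (q ^ 10) =
      qProd (-q ^ 10) (q ^ 10) ^ 2 * qProd q (q ^ 2) := by
  have hq2 := norm_pow_lt_one hq two_ne_zero
  have hq5 := norm_pow_lt_one hq (n := 5) (by norm_num)
  rw [jacobi_triple_product (pow_ne_zero 5 hq0) hq5 (pow_ne_zero 4 hq0),
    jacobi_triple_product (pow_ne_zero 5 hq0) hq5 (pow_ne_zero 2 hq0),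
    qProd_split q hq2 5 (by norm_num)]
  have e1 : (q ^ 4)⁻¹ * q ^ 5 = q := by field_simp
  have e2 : (q ^ 2)⁻¹ * q ^ 5 = q ^ 3 := by field_simp
  simp only [prod_range_succ, prod_range_zero, one_mul, e1, e2, ← pow_mul, ← pow_succ', ← pow_add]
  norm_num
  ring

theorem thetaSeries_fifth_roots (hq0 : q ≠ 0) (hq : ‖q‖ < 1) {ζ : ℂ}
    (hζ : ζ ^ 4 + ζ ^ 3 + ζ ^ 2 + ζ + 1 = 0) :
    thetaSeries ζ q * thetaSeries (ζ ^ 3) q * qProd q (q ^ 2) =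
      qProd (-q ^ 2) (q ^ 2) ^ 2 * qProd (q ^ 5) (q ^ 10) := by
  have hq2 := norm_pow_lt_one hq two_ne_zero
  have h5 : ζ ^ 5 = 1 := by linear_combination (ζ - 1) * hζ
  have hζ0 : ζ ≠ 0 := by rintro rfl; norm_num at h5
  rw [jacobi_triple_product hq0 hq hζ0, jacobi_triple_product hq0 hq (pow_ne_zero 3 hζ0)]
  have e1 : ζ⁻¹ = ζ ^ 4 := by field_simp; linear_combination -h5
  have e2 : (ζ ^ 3)⁻¹ = ζ ^ 2 := by field_simp; linear_combination -h5
  have h := qProd_mul_fifth_roots hζ q hq2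
  rw [← pow_mul] at h
  norm_num at h
  rw [e1, e2, ← h]
  ring

theorem quintic_theta_complex (hq0 : q ≠ 0) (hq : ‖q‖ < 1) :
    (5 * thetaSeries 1 (q ^ 5) ^ 2 - thetaSeries 1 q ^ 2) *
        (q * psiSeries (q ^ 10) * thetaSeries 1 (-q ^ 5)) =
      psiSeries (q ^ 2) * thetaSeries 1 (-q) *
        (thetaSeries 1 q ^ 2 - thetaSeries 1 (q ^ 5) ^ 2) := by
  have hq2 := norm_pow_lt_one hq two_ne_zero
  have hq5 := norm_pow_lt_one hq (n := 5) (by norm_num)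
  have hq10 := norm_pow_lt_one hq (n := 10) (by norm_num)
  obtain ⟨ζ, hζ⟩ : ∃ ζ : ℂ, ζ ^ 4 + ζ ^ 3 + ζ ^ 2 + ζ + 1 = 0 := by
    have h := (Complex.isPrimitiveRoot_exp 5 (by norm_num)).geom_sum_eq_zero (by norm_num)
    simp only [sum_range_succ, sum_range_zero, zero_add, pow_zero, pow_one] at h
    exact ⟨_, by linear_combination h⟩
  have h5 : ζ ^ 5 = 1 := by linear_combination (ζ - 1) * hζ
  have hζ0 : ζ ≠ 0 := by rintro rfl; norm_num at h5
  have e1 : ζ⁻¹ = ζ ^ 4 := by field_simp; linear_combination -h5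
  have e2 : (ζ ^ 3)⁻¹ = ζ ^ 2 := by field_simp; linear_combination -h5
  have L1 := thetaSeries_mul_thetaSeries hq0 hq one_ne_zero one_ne_zero (by norm_num) (by norm_num)
  have L2 := thetaSeries_mul_thetaSeries hq0 hq hζ0 (pow_ne_zero 3 hζ0)
    (by linear_combination h5) (by linear_combination ζ * h5)
  rw [e1, e2] at L2
  have P1 := thetaSeries_four_mul_two hq0 hq
  have P2 := thetaSeries_fifth_roots hq0 hq hζ
  have hO : qProd q (q ^ 2) ≠ 0 := qProd_ne_zero hq2 hq
  have hO5 : qProd (q ^ 5) (q ^ 10) ≠ 0 := qProd_ne_zero hq10 hq5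
  have euler : ∀ x : ℂ, ‖x‖ < 1 →
      qProd x (x ^ 2) * qProd (-x) (x ^ 2) * qProd (x ^ 2) (x ^ 2) = 1 := by
    intro x hx
    rw [qProd_mul_neg x (norm_pow_lt_one hx two_ne_zero)]
    exact euler_odd_distinct (norm_pow_lt_one hx two_ne_zero)
  have E1 := euler q hq
  have E5 := euler (q ^ 5) hq5
  have F1 := thetaSeries_one_eq (neg_ne_zero.2 hq0) (by simpa using hq)
  have F5 := thetaSeries_one_eq (neg_ne_zero.2 (pow_ne_zero 5 hq0)) (by simpa using hq5)
  have G1 := psiSeries_eq (pow_ne_zero 2 hq0) hq2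
  have G10 := psiSeries_eq (pow_ne_zero 10 hq0) hq10
  rw [neg_sq] at F1 F5
  rw [← pow_mul] at F5 E5
  norm_num at F5 E5
  have L1' : thetaSeries 1 q ^ 2 = thetaSeries 1 (q ^ 5) ^ 2 +
      4 * (q * (thetaSeries (q ^ 4) (q ^ 5) * thetaSeries (q ^ 2) (q ^ 5))) := by
    linear_combination L1
  have L2' : thetaSeries ζ q * thetaSeries (ζ ^ 3) q = thetaSeries 1 (q ^ 5) ^ 2 -
      q * (thetaSeries (q ^ 4) (q ^ 5) * thetaSeries (q ^ 2) (q ^ 5)) := by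
    linear_combination L2 + q * thetaSeries (q ^ 4) (q ^ 5) * thetaSeries (q ^ 2) (q ^ 5) * hζ
  rw [L2'] at P2
  rw [L1', F1, F5, G1, G10]
  apply mul_right_cancel₀ (mul_ne_zero hO hO5)
  generalize thetaSeries (q ^ 4) (q ^ 5) * thetaSeries (q ^ 2) (q ^ 5) = S at *
  generalize qProd (-q ^ 2) (q ^ 2) = e2 at *
  generalize qProd (-q ^ 10) (q ^ 10) = e10 at *
  generalize qProd q (q ^ 2) = o1 at *
  generalize qProd (-q) (q ^ 2) = o1' at *
  generalize qProd (q ^ 2) (q ^ 2) = p2 at *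
  generalize qProd (q ^ 5) (q ^ 10) = o5 at *
  generalize qProd (-q ^ 5) (q ^ 10) = o5' at *
  generalize qProd (q ^ 10) (q ^ 10) = p10 at *
  linear_combination 4 * q * e10 ^ 2 * p10 ^ 2 * o5' ^ 2 * o5 * P2 -
    4 * q * e2 ^ 2 * p2 ^ 2 * o1' ^ 2 * o1 * P1 +
    4 * q * e2 ^ 2 * e10 ^ 2 * ((o5 * o5' * p10 + 1) * E5 - (o1 * o1' * p2 + 1) * E1)

end ThetaProducts

section Real

variable {q : ℝ}

theorem ofReal_phi (q : ℝ) : (phi q : ℂ) = thetaSeries 1 q := by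
  simp [phi, thetaSeries, Complex.ofReal_tsum]

theorem ofReal_psi (q : ℝ) : (psi q : ℂ) = psiSeries q := by
  simp [psi, psiSeries, Complex.ofReal_tsum]

theorem norm_ofReal_lt_one (hq : |q| < 1) : ‖(q : ℂ)‖ < 1 := by
  rwa [Complex.norm_real]

theorem phi_ne_zero (hq0 : q ≠ 0) (hq : |q| < 1) : phi q ≠ 0 := by
  have := thetaSeries_one_ne_zero (Complex.ofReal_ne_zero.2 hq0) (norm_ofReal_lt_one hq)
  rw [← ofReal_phi] at this
  exact_mod_cast this

theorem psi_ne_zero (hq0 : q ≠ 0) (hq : |q| < 1) : psi q ≠ 0 := by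
  have := psiSeries_ne_zero (Complex.ofReal_ne_zero.2 hq0) (norm_ofReal_lt_one hq)
  rw [← ofReal_psi] at this
  exact_mod_cast this

theorem phi_mul_phi_neg (hq0 : q ≠ 0) (hq : |q| < 1) : phi q * phi (-q) = phi (-q ^ 2) ^ 2 := by
  have := thetaSeries_one_mul_neg (Complex.ofReal_ne_zero.2 hq0) (norm_ofReal_lt_one hq)
  apply Complex.ofReal_injective
  push_cast [ofReal_phi]
  exact this

theorem psi_sq (hq0 : q ≠ 0) (hq : |q| < 1) : psi q ^ 2 = phi q * psi (q ^ 2) := by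
  have := psiSeries_sq (Complex.ofReal_ne_zero.2 hq0) (norm_ofReal_lt_one hq)
  apply Complex.ofReal_injective
  push_cast [ofReal_phi, ofReal_psi]
  exact this

theorem quintic_theta (hq0 : q ≠ 0) (hq : |q| < 1) :
    (5 * phi (q ^ 5) ^ 2 - phi q ^ 2) * (q * psi (q ^ 10) * phi (-q ^ 5)) =
      psi (q ^ 2) * phi (-q) * (phi q ^ 2 - phi (q ^ 5) ^ 2) := by
  have := quintic_theta_complex (Complex.ofReal_ne_zero.2 hq0) (norm_ofReal_lt_one hq)
  apply Complex.ofReal_injective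
  push_cast [ofReal_phi, ofReal_psi]
  exact this

theorem phi_pos (hq0 : 0 < q) (hq : q < 1) : 0 < phi q :=
  lt_of_le_of_ne (tsum_nonneg fun n => by positivity)
    (phi_ne_zero hq0.ne' (by rwa [abs_of_pos hq0])).symm

theorem phi_neg_pos (hq0 : 0 < q) (hq : q < 1) : 0 < phi (-q) := by
  have hq' : |q| < 1 := by rwa [abs_of_pos hq0]
  have h := phi_mul_phi_neg hq0.ne' hq'
  have h2 : phi (-q ^ 2) ≠ 0 := phi_ne_zero (by simpa using hq0.ne')
    (by rw [abs_neg, abs_pow]; exact pow_lt_one₀ (abs_nonneg _) hq' two_ne_zero)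
  have : 0 < phi q * phi (-q) := by rw [h]; positivity
  exact (pos_iff_pos_of_mul_pos this).1 (phi_pos hq0 hq)

theorem psi_pos (hq0 : 0 < q) (hq : q < 1) : 0 < psi q :=
  lt_of_le_of_ne (tsum_nonneg fun n => by positivity)
    (psi_ne_zero hq0.ne' (by rwa [abs_of_pos hq0])).symm

theorem psi_neg_sq_mul_phi_neg_sq (hq0 : 0 < q) (hq : q < 1) :
    psi (-q) ^ 2 * phi (-q ^ 2) ^ 2 = phi q * phi (-q) ^ 2 * psi (q ^ 2) := by
  have hq' : |q| < 1 := by rwa [abs_of_pos hq0]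
  rw [psi_sq (neg_ne_zero.2 hq0.ne') (by rwa [abs_neg]), ← phi_mul_phi_neg hq0.ne' hq', neg_sq]
  ring

theorem psi_neg_sq_mul_phi_neg_sq_sq (hq0 : 0 < q) (hq : q < 1) :
    psi (-q ^ 2) ^ 2 * phi (-(q ^ 2) ^ 2) ^ 2 = phi q * phi (-q) * psi (q ^ 2) ^ 2 := by
  have hq' : |q| < 1 := by rwa [abs_of_pos hq0]
  have hq2 : q ^ 2 < 1 := pow_lt_one₀ hq0.le hq two_ne_zero
  rw [psi_neg_sq_mul_phi_neg_sq (by positivity) hq2, phi_mul_phi_neg hq0.ne' hq',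
    psi_sq (by positivity) (by rwa [abs_of_pos (by positivity)])]
  ring

/-- The quotient `b_{s,5}` as a function of the nome. -/
theorem b_five_eq (s : ℝ) (hq : q = Real.exp (-(π * √(s / 5)))) :
    b s 5 = 5 * q * (psi (-q ^ 5) ^ 2 * phi (-(q ^ 5) ^ 2) ^ 2) /
      (psi (-q) ^ 2 * phi (-q ^ 2) ^ 2) := by
  have h5 : √(s * 5) = 5 * √(s / 5) := by
    rw [show s * 5 = 5 ^ 2 * (s / 5) by ring, Real.sqrt_mul (by positivity),
      Real.sqrt_sq (by norm_num)]
  rw [b, h5, hq]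
  simp only [← Real.exp_nat_mul]
  push_cast
  ring_nf

theorem mixed_modular_equation {p r t : ℝ} (hp : 0 < p) (hr : 0 < r)
    (h1 : 5 - p ^ 2 = t * r * (p ^ 2 - 1)) (h2 : 5 - r ^ 2 = -(t * p * (r ^ 2 - 1))) :
    p * (t + r) = 5 + t * r ∧ p * (t * r + 1) = t + r := by
  have hD : p ^ 2 * r ^ 2 - 4 * p * r - p ^ 2 - r ^ 2 + 5 = 0 := by
    have : (p + r) * (p ^ 2 * r ^ 2 - 4 * p * r - p ^ 2 - r ^ 2 + 5) = 0 := by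
      linear_combination -p * (r ^ 2 - 1) * h1 - r * (p ^ 2 - 1) * h2
    exact (mul_eq_zero.1 this).resolve_left (by positivity)
  have hp1 : p ^ 2 - 1 ≠ 0 := by
    intro h; rw [h] at h1; linarith
  have hI : p * (t + r) = 5 + t * r := by
    apply mul_left_cancel₀ (mul_ne_zero hr.ne' hp1)
    linear_combination (-(p - r)) * h1 + p * hD
  refine ⟨hI, ?_⟩
  apply mul_left_cancel₀ (mul_ne_zero hp.ne' hp1)
  linear_combination (-(p ^ 2 - 1)) * hI - p ^ 2 * h1 + h1

theorem mixed_modular_equation_quotients {p r t A B : ℝ} (hp : 0 < p) (hr : 0 < r) (ht : 0 < t)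
    (h1 : p * (t + r) = 5 + t * r) (h2 : p * (t * r + 1) = t + r)
    (hA : A = 5 / (p * t * r ^ 2)) (hB : B = 5 / (p * t ^ 2 * r)) :
    (A / B) ^ 2 + (B / A) ^ 2 - 3 * (A / B + B / A) - 5 * (A + B + 1 / A + 1 / B) - 12 = 0 := by
  have e1 : A / B = t / r := by rw [hA, hB]; field_simp
  have e2 : B / A = r / t := by rw [hA, hB]; field_simp
  rw [e1, e2, hA, hB]
  have hs : (t + r) ^ 2 = (5 + t * r) * (1 + t * r) := by
    apply mul_left_cancel₀ hp.ne'
    linear_combination (t + r) * h1 - (5 + t * r) * h2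
  have hN : p * (t ^ 4 + r ^ 4) - 3 * p * (r * t) * (t ^ 2 + r ^ 2) - 25 * (r + t) -
      p ^ 2 * t ^ 3 * r ^ 3 * (r + t) - 12 * p * r ^ 2 * t ^ 2 = 0 := by
    linear_combination 25 * h2 - p * (t * r) ^ 3 * h1 +
      p * ((t + r) ^ 2 + (5 + t * r) * (1 + t * r) - 7 * (t * r)) * hs
  have : p * r ^ 2 * t ^ 2 ≠ 0 := by positivity
  rw [← div_eq_zero_iff.2 (Or.inl hN : _ ∨ p * r ^ 2 * t ^ 2 = 0)]
  field_simp
  ring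

theorem b_five_modular_equation {A B : ℝ} (hq0 : 0 < q) (hq : q < 1)
    (hA : A = 5 * q * (psi (-q ^ 5) ^ 2 * phi (-(q ^ 5) ^ 2) ^ 2) /
      (psi (-q) ^ 2 * phi (-q ^ 2) ^ 2))
    (hB : B = 5 * q ^ 2 * (psi (-(q ^ 5) ^ 2) ^ 2 * phi (-((q ^ 5) ^ 2) ^ 2) ^ 2) /
      (psi (-q ^ 2) ^ 2 * phi (-(q ^ 2) ^ 2) ^ 2)) :
    0 < A ∧ 0 < B ∧
      (A / B) ^ 2 + (B / A) ^ 2 - 3 * (A / B + B / A) - 5 * (A + B + 1 / A + 1 / B) - 12 = 0 := by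
  have hq50 : 0 < q ^ 5 := by positivity
  have hq5 : q ^ 5 < 1 := pow_lt_one₀ hq0.le hq (by norm_num)
  have hq2 : q ^ 2 < 1 := pow_lt_one₀ hq0.le hq (by norm_num)
  have hq10 : q ^ 10 < 1 := pow_lt_one₀ hq0.le hq (by norm_num)
  have hq' : |q| < 1 := by rwa [abs_of_pos hq0]
  rw [psi_neg_sq_mul_phi_neg_sq hq0 hq, psi_neg_sq_mul_phi_neg_sq hq50 hq5] at hA
  rw [psi_neg_sq_mul_phi_neg_sq_sq hq0 hq, psi_neg_sq_mul_phi_neg_sq_sq hq50 hq5] at hB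
  rw [show (q ^ 5) ^ 2 = q ^ 10 by ring] at hA hB
  have Q1 := quintic_theta hq0.ne' hq'
  have Q2 := quintic_theta (neg_ne_zero.2 hq0.ne') (by rwa [abs_neg])
  rw [show (-q) ^ 5 = -q ^ 5 by ring, show (-q) ^ 10 = q ^ 10 by ring, neg_sq, neg_neg,
    neg_neg] at Q2
  have a1 := phi_pos hq0 hq
  have a5 := phi_pos hq50 hq5
  have c1 := phi_neg_pos hq0 hq
  have c5 := phi_neg_pos hq50 hq5
  have d2 := psi_pos (q := q ^ 2) (by positivity) hq2
  have d10 := psi_pos (q := q ^ 10) (by positivity) hq10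
  generalize phi q = x1 at *
  generalize phi (q ^ 5) = x5 at *
  generalize phi (-q) = y1 at *
  generalize phi (-q ^ 5) = y5 at *
  generalize psi (q ^ 2) = w2 at *
  generalize psi (q ^ 10) = w10 at *
  refine ⟨by rw [hA]; positivity, by rw [hB]; positivity, ?_⟩
  have hp : 0 < x1 / x5 := by positivity
  have hr : 0 < y1 / y5 := by positivity
  have ht : 0 < w2 / (q * w10) := by positivity
  obtain ⟨h1, h2⟩ := mixed_modular_equation (t := w2 / (q * w10)) hp hr
    (by field_simp; linear_combination Q1) (by field_simp; linear_combination -Q2)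
  refine mixed_modular_equation_quotients hp hr ht h1 h2 ?_ ?_
  · rw [hA]; field_simp
  · rw [hB]; field_simp

end Real

theorem stmt_10 (s X Y : ℝ) (hs : 0 < s)
    (hX : X = Real.sqrt (b s 5 * b (4 * s) 5))
    (hY : Y = Real.sqrt (b s 5 / b (4 * s) 5)) :
    (Y ^ 4 + 1 / Y ^ 4) - 3 * (Y ^ 2 + 1 / Y ^ 2)
      - 5 * (X + 1 / X) * (Y + 1 / Y) - 12 = 0 := by
  have hq : Real.exp (-(π * √(s / 5))) < 1 := Real.exp_lt_one_iff.2 (by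
    have : 0 < √(s / 5) := Real.sqrt_pos.2 (by positivity)
    have := Real.pi_pos
    have : 0 < π * √(s / 5) := by positivity
    linarith)
  have hq4 : Real.exp (-(π * √(s / 5))) ^ 2 = Real.exp (-(π * √(4 * s / 5))) := by
    rw [← Real.exp_nat_mul, show 4 * s / 5 = 2 ^ 2 * (s / 5) by ring,
      Real.sqrt_mul (by positivity), Real.sqrt_sq (by norm_num)]
    push_cast; ring_nf
  have hA := b_five_eq s rfl
  have hB := b_five_eq (4 * s) hq4
  rw [show ∀ x : ℝ, (x ^ 2) ^ 5 = (x ^ 5) ^ 2 from fun x => by ring] at hB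
  obtain ⟨pA, pB, h⟩ := b_five_modular_equation (Real.exp_pos _) hq hA hB
  generalize b s 5 = A at *
  generalize b (4 * s) 5 = B at *
  have hX0 : 0 < X := by rw [hX]; exact Real.sqrt_pos.2 (by positivity)
  have hY0 : 0 < Y := by rw [hY]; exact Real.sqrt_pos.2 (by positivity)
  have hXY : A = X * Y := by
    rw [hX, hY, ← Real.sqrt_mul (by positivity), show A * B * (A / B) = A ^ 2 by field_simp,
      Real.sqrt_sq pA.le]
  have hY2 : Y ^ 2 = A / B := by rw [hY, Real.sq_sqrt (by positivity)]
  have hB' : B = X / Y := by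
    field_simp at hY2 ⊢
    apply mul_left_cancel₀ hY0.ne'
    linear_combination hY2 + hXY
  rw [hXY, hB'] at h
  rw [← h]
  field_simp
  ring
end
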